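/- arXiv:math/9201303 — 5 statements merged into one kernel-verified Lean document; each statement's English description precedes it below -/
import Mathlib

section
/- For every sufficiently large integer $n$, let $N_0 = \lfloor n \ln n \ln\ln n \rfloor$ and let $X$ be a binomial random variable with parameters $N_0$ and success probability $1/n$. Then $\Pr\bigl(X \geq \ln n \,(\ln\ln n)^2\bigr) \leq \exp\bigl(-(\ln 2)\,\ln n\,(\ln\ln n)^2 + \ln n \cdot \ln\ln n\bigr)$, and consequently for every constant $K > 0$, $n^{K} \Pr\bigl(X \geq \ln n \,(\ln\ln n)^2\bigr) \to 0$ as $n \to \infty$. -/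
open MeasureTheory Filter Real

/-!
Chernoff's bound with `z = 2`: a binomial variable `X` has generating function
`E z ^ X = (1 + p (z - 1)) ^ N ≤ exp (N p (z - 1))`, so Markov's inequality for `2 ^ X` gives
`P(X ≥ a) ≤ exp (-(log 2) a + N p)`, and here `N₀ / n ≤ log n * log (log n)`. In the exponent the
term `(log 2) log n (log (log n))²` eventually dominates both `log n * log (log n)` and `K log n`.
-/

lemma floor_mul_mul_one_div_le {x m : ℝ} (hx : 0 < x) (hm : 0 ≤ m) :
    (⌊x * m⌋₊ : ℝ) * (1 / x) ≤ m := by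
  rw [mul_one_div, div_le_iff₀' hx]
  exact Nat.floor_le (by positivity)

lemma log_log_nonneg_of_three_le {x : ℝ} (hx : 3 ≤ x) : 0 ≤ log (log x) := by
  refine log_nonneg ?_
  rw [le_log_iff_exp_le (by linarith)]
  exact exp_one_lt_three.le.trans hx

section BinomialTail

open ProbabilityTheory unitInterval

variable {Ω : Type*} [MeasurableSpace Ω] {P : Measure Ω} {X : Ω → ℕ} {N : ℕ} {p : I}

lemma hasLaw_binomial_of_measureReal_eq [IsFiniteMeasure P] (hX : AEMeasurable X P)
    (h : ∀ k, P.real {ω | X ω = k} = N.choose k * (p : ℝ) ^ k * (1 - p) ^ (N - k)) :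
    HasLaw X Bin(N, p) P where
  aemeasurable := hX
  map_eq := by
    refine Measure.ext_of_measureReal_singleton fun k ↦ ?_
    rw [map_measureReal_apply_of_aemeasurable hX (measurableSet_singleton k),
      binomial_real_singleton]
    exact h k

lemma mgf_binomial (N : ℕ) (p : I) (t : ℝ) :
    mgf (fun k : ℕ ↦ (k : ℝ)) Bin(N, p) t = (p * exp t + (1 - p)) ^ N := by
  rw [mgf, integral_binomial, add_pow, Nat.range_succ_eq_Iic]
  refine Finset.sum_congr rfl fun k _ ↦ ?_
  rw [mul_comm t, exp_nat_mul, mul_pow, smul_eq_mul]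
  ring

lemma mgf_binomial_le_exp (N : ℕ) (p : I) (t : ℝ) :
    mgf (fun k : ℕ ↦ (k : ℝ)) Bin(N, p) t ≤ exp (N * p * (exp t - 1)) := by
  have base_nonneg : 0 ≤ p * exp t + (1 - p) :=
    add_nonneg (mul_nonneg p.2.1 (exp_pos t).le) (sub_nonneg.2 p.2.2)
  have base_le : p * exp t + (1 - p) ≤ exp (p * (exp t - 1)) := by
    linarith [add_one_le_exp (p * (exp t - 1))]
  calc mgf (fun k : ℕ ↦ (k : ℝ)) Bin(N, p) t
      = (p * exp t + (1 - p)) ^ N := mgf_binomial N p t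
    _ ≤ exp (p * (exp t - 1)) ^ N := pow_le_pow_left₀ base_nonneg base_le N
    _ = exp (N * p * (exp t - 1)) := by rw [← exp_nat_mul, mul_assoc]

lemma measureReal_ge_le_exp_of_hasLaw_binomial (hX : HasLaw X Bin(N, p) P) {t : ℝ} (ht : 0 ≤ t)
    (a : ℝ) :
    P.real {ω | a ≤ (X ω : ℝ)} ≤ exp (-t * a + N * p * (exp t - 1)) := by
  calc P.real {ω | a ≤ (X ω : ℝ)}
      = Bin(N, p).real {k : ℕ | a ≤ (k : ℝ)} :=
        hX.measureReal_eq (p := fun k : ℕ ↦ a ≤ (k : ℝ)) .of_discrete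
    _ ≤ exp (-t * a) * mgf (fun k : ℕ ↦ (k : ℝ)) Bin(N, p) t :=
        measure_ge_le_exp_mul_mgf a ht (integrable_binomial _)
    _ ≤ exp (-t * a) * exp (N * p * (exp t - 1)) := by gcongr; exact mgf_binomial_le_exp N p t
    _ = exp (-t * a + N * p * (exp t - 1)) := (exp_add _ _).symm

lemma measureReal_ge_le_exp_log_two_of_hasLaw_binomial (hX : HasLaw X Bin(N, p) P) (a : ℝ) :
    P.real {ω | a ≤ (X ω : ℝ)} ≤ exp (-log 2 * a + N * p) := by
  have exp_log_two_sub_one : exp (log 2) - 1 = 1 := by rw [exp_log two_pos]; norm_num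
  simpa only [exp_log_two_sub_one, mul_one] using
    measureReal_ge_le_exp_of_hasLaw_binomial hX (log_nonneg one_le_two) a

lemma measureReal_ge_log_mul_log_log_sq_le {x : ℝ} (hx : 3 ≤ x) (hp : (p : ℝ) = 1 / x)
    (hX : HasLaw X Bin(⌊x * log x * log (log x)⌋₊, p) P) :
    P.real {ω | log x * log (log x) ^ 2 ≤ (X ω : ℝ)} ≤
      exp (-log 2 * log x * log (log x) ^ 2 + log x * log (log x)) := by
  have mean_le : (⌊x * log x * log (log x)⌋₊ : ℝ) * p ≤ log x * log (log x) := by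
    rw [hp, mul_assoc x]
    exact floor_mul_mul_one_div_le (by linarith)
      (mul_nonneg (log_nonneg (by linarith)) (log_log_nonneg_of_three_le hx))
  calc P.real {ω | log x * log (log x) ^ 2 ≤ (X ω : ℝ)}
      ≤ exp (-log 2 * (log x * log (log x) ^ 2) + ⌊x * log x * log (log x)⌋₊ * p) :=
        measureReal_ge_le_exp_log_two_of_hasLaw_binomial hX _
    _ ≤ exp (-log 2 * log x * log (log x) ^ 2 + log x * log (log x)) := by
        rw [← mul_assoc]; gcongr

end BinomialTail

lemma tendsto_rpow_mul_exp_log_mul_nhds_zero {g : ℝ → ℝ} (hg : Tendsto g atTop atBot) (K : ℝ) :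
    Tendsto (fun x ↦ x ^ K * exp (log x * g x)) atTop (nhds 0) := by
  have exponent : Tendsto (fun x ↦ log x * (K + g x)) atTop atBot :=
    tendsto_log_atTop.atTop_mul_atBot₀ (tendsto_atBot_add_const_left _ K hg)
  refine (tendsto_exp_atBot.comp exponent).congr' ?_
  filter_upwards [eventually_gt_atTop 0] with x hx
  rw [Function.comp_apply, rpow_def_of_pos hx, ← exp_add, mul_add]

lemma tendsto_sub_mul_sq_atBot {c : ℝ} (hc : 0 < c) :
    Tendsto (fun y : ℝ ↦ y - c * y ^ 2) atTop atBot := by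
  have factor : Tendsto (fun y : ℝ ↦ 1 + -c * y) atTop atBot :=
    tendsto_atBot_add_const_left _ 1 (tendsto_id.const_mul_atTop_of_neg (neg_lt_zero.2 hc))
  exact (tendsto_id.atTop_mul_atBot₀ factor).congr fun y ↦ by rw [id]; ring

lemma tendsto_rpow_mul_exp_log_mul_log_log_sq (K : ℝ) {c : ℝ} (hc : 0 < c) :
    Tendsto (fun x ↦ x ^ K * exp (-c * log x * log (log x) ^ 2 + log x * log (log x)))
      atTop (nhds 0) := by
  have rate : Tendsto (fun x ↦ log (log x) - c * log (log x) ^ 2) atTop atBot :=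
    (tendsto_sub_mul_sq_atBot hc).comp (tendsto_log_atTop.comp tendsto_log_atTop)
  refine (tendsto_rpow_mul_exp_log_mul_nhds_zero rate K).congr fun x ↦ ?_
  ring_nf

/-- **Lemma 9, second part.** For each `n ≥ 3`, let
`N₀ = ⌊n · ln n · ln ln n⌋` and let `X n` be a binomial random variable with
parameters `N₀` and success probability `1/n`.  Then for every sufficiently
large `n`,
`Pr(X n ≥ ln n (ln ln n)²) ≤ exp(-(ln 2) ln n (ln ln n)² + ln n · ln ln n)`,
and consequently for every constant `K > 0`,
`n^K * Pr(X n ≥ ln n (ln ln n)²) → 0` as `n → ∞`. -/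
theorem lemma9_second_part
    (Ω : ℕ → Type*) [∀ n, MeasurableSpace (Ω n)]
    (μ : ∀ n, Measure (Ω n)) [∀ n, IsProbabilityMeasure (μ n)]
    (X : ∀ n, Ω n → ℕ) (hmeas : ∀ n, Measurable (X n))
    (hbinom : ∀ n, 3 ≤ n → ∀ k : ℕ,
      ((μ n) {ω | X n ω = k}).toReal =
        (Nat.choose ⌊(n : ℝ) * Real.log n * Real.log (Real.log n)⌋₊ k : ℝ) *
          (1 / n) ^ k *
          (1 - 1 / n) ^ (⌊(n : ℝ) * Real.log n * Real.log (Real.log n)⌋₊ - k)) :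
    (∃ n₀ : ℕ, ∀ n : ℕ, n₀ ≤ n →
      ((μ n) {ω | Real.log n * (Real.log (Real.log n)) ^ 2 ≤ (X n ω : ℝ)}).toReal ≤
        Real.exp (-(Real.log 2) * Real.log n * (Real.log (Real.log n)) ^ 2 +
          Real.log n * Real.log (Real.log n))) ∧
    (∀ K : ℝ, 0 < K →
      Tendsto (fun n : ℕ =>
          (n : ℝ) ^ K *
            ((μ n) {ω | Real.log n * (Real.log (Real.log n)) ^ 2 ≤ (X n ω : ℝ)}).toReal)
        atTop (nhds 0)) := by
  have tail_le (n : ℕ) (hn : 3 ≤ n) :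
      (μ n).real {ω | log n * log (log n) ^ 2 ≤ (X n ω : ℝ)} ≤
        exp (-log 2 * log n * log (log n) ^ 2 + log n * log (log n)) := by
    have three_le : (3 : ℝ) ≤ n := by exact_mod_cast hn
    let p : unitInterval := ⟨1 / n, unitInterval.div_mem one_pos.le n.cast_nonneg (by linarith)⟩
    exact measureReal_ge_log_mul_log_log_sq_le (p := p) three_le rfl
      (hasLaw_binomial_of_measureReal_eq (hmeas n).aemeasurable (hbinom n hn))
  refine ⟨⟨3, tail_le⟩, fun K _ ↦ ?_⟩
  have majorant_tendsto := (tendsto_rpow_mul_exp_log_mul_log_log_sq K (log_pos one_lt_two)).comp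
    tendsto_natCast_atTop_atTop
  refine squeeze_zero' (.of_forall fun n ↦ by positivity) ?_ majorant_tendsto
  filter_upwards [eventually_ge_atTop 3] with n hn
  exact mul_le_mul_of_nonneg_left (tail_le n hn) (by positivity)
end

section
/- For every $n \geq 1$ and every preference profile for $n$ girls and $n$ boys, there exists a stable matching. -/
/-- A preference profile for `n` girls and `n` boys: each girl `g` ranks the
boys via a bijection `P.1 g : Fin n ≃ Fin n` (boy `b` occupies position
`P.1 g b`, position `0` being her favorite), and each boy `b` ranks the girls
via `P.2 b`. -/
abbrev PrefProfile (n : ℕ) := (Fin n → Equiv.Perm (Fin n)) × (Fin n → Equiv.Perm (Fin n))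

/-- Girl `g` strictly prefers boy `b` to boy `b'`. -/
def GirlPrefers {n : ℕ} (P : PrefProfile n) (g b b' : Fin n) : Prop := P.1 g b < P.1 g b'

/-- Boy `b` strictly prefers girl `g` to girl `g'`. -/
def BoyPrefers {n : ℕ} (P : PrefProfile n) (b g g' : Fin n) : Prop := P.2 b g < P.2 b g'

/-- A matching `M` (pairing girl `g` with boy `M g`) is stable if no girl `g`
and boy `b` who are not matched to each other prefer each other to their
current partners. -/
def IsStableMatching {n : ℕ} (P : PrefProfile n) (M : Fin n ≃ Fin n) : Prop :=
  ¬ ∃ g b, b ≠ M g ∧ GirlPrefers P g b (M g) ∧ BoyPrefers P b g (M.symm b)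

/-!
Girls propose in order of preference, and a boy with several suitors rejects all but his favourite.
Throughout, every boy whom a girl prefers to her current choice has a suitor he likes at least as
well as her: a boy's situation never deteriorates. As long as two girls court the same boy, one of
them can move down her list; she cannot be at its end, since then every boy would have a suitor, and
equal numbers would force distinct choices. So the process stops at a matching, and the invariant
says precisely that this matching has no blocking pair.
-/

section ProposalState

variable {α β γ δ : Type*} [LinearOrder γ] [LinearOrder δ] {u : α → β → γ} {v : β → α → δ}
  {c : α → β}

/-- The invariant of the Gale–Shapley algorithm, for girls `α` and boys `β`, where girl `a` is
currently proposing to boy `c a`: every boy she prefers to `c a` has a suitor he likes at least as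
well as her. Preferences are encoded by ranks `u a b` and `v b a`, smaller being better; equal ranks
express indifference. -/
def IsProposalState (u : α → β → γ) (v : β → α → δ) (c : α → β) : Prop :=
  ∀ a b, u a b < u a (c a) → ∃ a', c a' = b ∧ v b a' ≤ v b a

theorem exists_isProposalState [Finite β] (h : Nonempty (α → β)) (u : α → β → γ)
    (v : β → α → δ) : ∃ c, IsProposalState u v c := by
  have exists_favourite (a : α) : ∃ b, ∀ b', u a b ≤ u a b' :=
    have : Nonempty β := h.map (· a)
    Finite.exists_min (u a)
  choose c hc using exists_favourite
  exact ⟨c, fun a b hb => absurd hb (hc a b).not_gt⟩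

namespace IsProposalState

theorem exists_suitor_of_le (hc : IsProposalState u v c) {a : α} (hu : (u a).Injective) {b : β}
    (hb : u a b ≤ u a (c a)) : ∃ a', c a' = b ∧ v b a' ≤ v b a := by
  rcases hb.lt_or_eq with hlt | heq
  · exact hc a b hlt
  · exact ⟨a, (hu heq).symm, le_rfl⟩

theorem surjective_of_forall_le (hc : IsProposalState u v c) {a : α} (hu : (u a).Injective)
    (hlast : ∀ b, u a b ≤ u a (c a)) : c.Surjective := fun b =>
  (hc.exists_suitor_of_le hu (hlast b)).imp fun _ => And.left

theorem update [DecidableEq α] (hc : IsProposalState u v c) {a₁ a₂ : α} (hu : (u a₂).Injective)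
    (hne : a₁ ≠ a₂) (heq : c a₁ = c a₂) (hle : v (c a₂) a₁ ≤ v (c a₂) a₂) {b₀ : β}
    (hnext : ∀ b, u a₂ b < u a₂ b₀ → u a₂ b ≤ u a₂ (c a₂)) :
    IsProposalState u v (Function.update c a₂ b₀) := by
  intro a b hb
  have exists_old_suitor : ∃ a', c a' = b ∧ v b a' ≤ v b a := by
    rcases eq_or_ne a a₂ with rfl | ha
    · rw [Function.update_self] at hb
      exact hc.exists_suitor_of_le hu (hnext b hb)
    · rw [Function.update_of_ne ha] at hb
      exact hc a b hb
  obtain ⟨a', rfl, ha'⟩ := exists_old_suitor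
  rcases eq_or_ne a' a₂ with rfl | hne'
  · exact ⟨a₁, by rw [Function.update_of_ne hne, heq], hle.trans ha'⟩
  · exact ⟨a', Function.update_of_ne hne' _ _, ha'⟩

theorem exists_lt_of_not_injective [Finite α] [Finite β] (hcard : Nat.card α = Nat.card β)
    (hu : ∀ a, (u a).Injective) (hc : IsProposalState u v c) (hinj : ¬ c.Injective) :
    ∃ c', IsProposalState u v c' ∧ (fun a => u a (c a)) < fun a => u a (c' a) := by
  classical
  obtain ⟨a₁, a₂, heq, hne⟩ := Function.not_injective_iff.mp hinj
  wlog hle : v (c a₂) a₁ ≤ v (c a₂) a₂ generalizing a₁ a₂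
  · exact this a₂ a₁ heq.symm hne.symm (heq ▸ le_of_not_ge hle)
  have exists_worse : ∃ b, u a₂ (c a₂) < u a₂ b := by
    by_contra! hlast
    have hsurj : c.Surjective := hc.surjective_of_forall_le (hu a₂) hlast
    exact hinj (hsurj.bijective_of_nat_card_le hcard.le).injective
  obtain ⟨b₀, hb₀, hmin⟩ :=
    Set.exists_min_image {b | u a₂ (c a₂) < u a₂ b} (u a₂) (Set.toFinite _) exists_worse
  refine ⟨Function.update c a₂ b₀, hc.update (hu a₂) hne heq hle fun b hb => ?_, ?_⟩
  · exact le_of_not_gt fun hgt => (hmin b hgt).not_gt hb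
  · refine Pi.lt_def.mpr ⟨fun a => ?_, a₂, by simpa using hb₀⟩
    rcases eq_or_ne a a₂ with rfl | ha
    · simpa using hb₀.le
    · simp [ha]

theorem rank_symm_apply_le {M : α ≃ β} (hM : IsProposalState u v M) {a : α} {b : β}
    (hb : u a b < u a (M a)) : v b (M.symm b) ≤ v b a := by
  obtain ⟨a', rfl, ha'⟩ := hM a b hb
  rwa [M.symm_apply_apply]

end IsProposalState

theorem exists_equiv_isProposalState [Finite α] [Finite β] (hcard : Nat.card α = Nat.card β)
    (hu : ∀ a, (u a).Injective) (v : β → α → δ) : ∃ M : α ≃ β, IsProposalState u v M := by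
  have hne : Nonempty (α → β) := (Finite.card_eq.mp hcard).map (⇑)
  obtain ⟨c, hc, hmax⟩ := (Set.toFinite {c | IsProposalState u v c}).exists_maximalFor
    (fun c a => u a (c a)) _ (exists_isProposalState hne u v)
  have hinj : c.Injective := by
    by_contra hinj
    obtain ⟨c', hc', hlt⟩ := IsProposalState.exists_lt_of_not_injective hcard hu hc hinj
    exact hlt.not_ge (hmax hc' hlt.le)
  exact ⟨.ofBijective c (hinj.bijective_of_nat_card_le hcard.ge), hc⟩

theorem exists_stable_matching_general [Finite α] [Finite β] (hcard : Nat.card α = Nat.card β)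
    (u : α → β → γ) (v : β → α → δ) :
    ∃ M : α ≃ β, ∀ a b, u a b < u a (M a) → v b (M.symm b) ≤ v b a := by
  -- Breaking the girls' ties only adds strict preferences, hence potential blocking pairs.
  let w (a : α) (b : β) : γ ×ₗ Fin (Nat.card β) := toLex (u a b, Finite.equivFin β b)
  have hw (a : α) : (w a).Injective := fun b b' h =>
    (Finite.equivFin β).injective (congrArg (fun p => (ofLex p).2) h)
  obtain ⟨M, hM⟩ := exists_equiv_isProposalState hcard hw v
  exact ⟨M, fun a b hb => hM.rank_symm_apply_le (Prod.Lex.toLex_lt_toLex.mpr (.inl hb))⟩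

end ProposalState

/-- **Existence of stable matchings (Gale–Shapley).** For every `n ≥ 1` and
every preference profile for `n` girls and `n` boys, there exists a stable
matching. -/
theorem exists_stable_matching (n : ℕ) (hn : 1 ≤ n) (P : PrefProfile n) :
    ∃ M : Fin n ≃ Fin n, IsStableMatching P M := by
  obtain ⟨M, hM⟩ := exists_stable_matching_general rfl (fun g => P.1 g) (fun b => P.2 b)
  exact ⟨M, fun ⟨g, b, _, hg, hb⟩ => (hM g b hg).not_gt hb⟩
end

section
/- For every $n \geq 1$ and every preference profile for $n$ girls and $n$ boys, there exists a stable matching $M_0$ such that for every stable matching $M$: (i) every boy $b$ weakly prefers his partner $M_0^{-1}\,b$ in $M_0$ to his partner $M^{-1}\,b$ in $M$, and (ii) every girl $g$ weakly prefers her partner $M\,g$ in $M$ to her partner $M_0\,g$ in $M_0$. In other words, there is a boy-optimal stable matching, and it gives every girl her least preferred stable husband. -/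
/-!
Deferred acceptance without the algorithm: the rejections it produces form the least relation such
that girl `g` rejects boy `b` as soon as she prefers to `b` some boy whom every girl he likes better
than `g` rejects. By induction, no pair of a stable matching is ever rejected. A boy rejected by all
girls would leave every girl engaged to someone else, which is impossible when there are as many
girls as boys; hence every boy ends up engaged to the best girl who does not reject him. The
resulting matching is stable, it is boy-optimal because stable partners are never rejected, and
a girl who did better in it than in a stable matching `M` would form a blocking pair of `M` together
with her partner.
-/

section Stability

variable {G B : Type*} (girlPref : G → B → B → Prop) (boyPref : B → G → G → Prop)

/-- Stability of a perfect matching `M` of girls `G` with boys `B`, for arbitrary strict preference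
relations: `girlPref g b b'` means that `g` prefers `b` to `b'`, and `boyPref b g g'` that `b`
prefers `g` to `g'`. For irreflexive preferences, a blocking pair is automatically unmatched. -/
def IsStable (M : G ≃ B) : Prop :=
  ∀ g b, girlPref g b (M g) → ¬ boyPref b g (M.symm b)

variable {girlPref boyPref}

theorem IsStable.girlPref_or_eq_of_forall_boyPref_or_eq [∀ g, Std.Trichotomous (girlPref g)]
    {M M₀ : G ≃ B} (hM : IsStable girlPref boyPref M)
    (hboys : ∀ b, boyPref b (M₀.symm b) (M.symm b) ∨ M₀.symm b = M.symm b) (g : G) :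
    girlPref g (M g) (M₀ g) ∨ M g = M₀ g := by
  rcases trichotomous_of (girlPref g) (M g) (M₀ g) with hbetter | heq | hworse
  · exact .inl hbetter
  · exact .inr heq
  · have hnot : ¬ boyPref (M₀ g) g (M.symm (M₀ g)) := hM g (M₀ g) hworse
    have hpartner : g = M.symm (M₀ g) := by
      simpa only [Equiv.symm_apply_apply, hnot, false_or] using hboys (M₀ g)
    exact .inr (M.eq_symm_apply.mp hpartner)

end Stability

section DeferredAcceptance

variable {G B : Type*} (girlPref : G → B → B → Prop) (boyPref : B → G → G → Prop)

/-- `Rejected girlPref boyPref b g`: girl `g` rejects boy `b` at some point of the deferred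
acceptance procedure in which the boys propose. Unlike in the procedure, `b` need not have proposed
to `g`: she rejects everyone she likes less than one of her suitors. -/
inductive Rejected : B → G → Prop
  | of_girlPref {b b' : B} {g : G} (hpref : girlPref g b' b)
      (hproposes : ∀ g', boyPref b' g' g → Rejected b' g') : Rejected b g

/-- Boy `b` proposes to girl `g` at some point of the deferred acceptance procedure: every girl he
prefers to `g` rejects him. -/
def Proposes (b : B) (g : G) : Prop :=
  ∀ g', boyPref b g' g → Rejected girlPref boyPref b g'

/-- Boy `b` and girl `g` are engaged at the end of the deferred acceptance procedure: he proposes to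
her and she never rejects him. -/
structure Engaged (b : B) (g : G) : Prop where
  proposes : Proposes girlPref boyPref b g
  not_rejected : ¬ Rejected girlPref boyPref b g

variable {girlPref boyPref} {b b' : B} {g g' : G}

theorem Rejected.ne_of_isStable [∀ g, Std.Irrefl (girlPref g)] [∀ b, Std.Trichotomous (boyPref b)]
    {M : G ≃ B} (hM : IsStable girlPref boyPref M) (hrej : Rejected girlPref boyPref b g) :
    M.symm b ≠ g := by
  induction hrej with
  | @of_girlPref b b' g hpref _ ih =>
    rintro rfl
    have hpref_partner : girlPref (M.symm b) b' (M (M.symm b)) := by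
      rwa [M.apply_symm_apply]
    rcases trichotomous_of (boyPref b') (M.symm b') (M.symm b) with hbetter | heq | hworse
    · exact ih _ hbetter rfl
    · obtain rfl := M.symm.injective heq
      exact irrefl_of (girlPref _) _ hpref
    · exact hM _ _ hpref_partner hworse

theorem Engaged.girl_unique [∀ b, Std.Trichotomous (boyPref b)]
    (h : Engaged girlPref boyPref b g) (h' : Engaged girlPref boyPref b g') : g = g' := by
  rcases trichotomous_of (boyPref b) g g' with hlt | heq | hgt
  · exact absurd (h'.proposes g hlt) h.not_rejected
  · exact heq
  · exact absurd (h.proposes g' hgt) h'.not_rejected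

theorem Engaged.boy_unique [∀ g, Std.Trichotomous (girlPref g)]
    (h : Engaged girlPref boyPref b g) (h' : Engaged girlPref boyPref b' g) : b = b' := by
  rcases trichotomous_of (girlPref g) b b' with hlt | heq | hgt
  · exact absurd (.of_girlPref hlt h.proposes) h'.not_rejected
  · exact heq
  · exact absurd (.of_girlPref hgt h'.proposes) h.not_rejected

theorem Engaged.boyPref_or_eq_of_isStable [∀ g, Std.Irrefl (girlPref g)]
    [∀ b, Std.Trichotomous (boyPref b)] {M : G ≃ B} (h : Engaged girlPref boyPref b g)
    (hM : IsStable girlPref boyPref M) : boyPref b g (M.symm b) ∨ g = M.symm b := by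
  rcases trichotomous_of (boyPref b) g (M.symm b) with hbetter | heq | hworse
  · exact .inl hbetter
  · exact .inr heq
  · exact absurd rfl ((h.proposes _ hworse).ne_of_isStable hM)

theorem isStable_of_forall_engaged [∀ b, IsTrans G (boyPref b)] {M : G ≃ B}
    (hM : ∀ b, Engaged girlPref boyPref b (M.symm b)) : IsStable girlPref boyPref M := by
  intro g b hgirl hboy
  have hproposes : Proposes girlPref boyPref b g := fun g' hg' =>
    (hM b).proposes g' (trans_of (boyPref b) hg' hboy)
  have hrej : Rejected girlPref boyPref (M g) g := .of_girlPref hgirl hproposes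
  have hengaged : Engaged girlPref boyPref (M g) g := by
    simpa only [Equiv.symm_apply_apply] using hM (M g)
  exact hengaged.not_rejected hrej

theorem Rejected.exists_engaged [∀ g, IsWellFounded B (girlPref g)]
    (hrej : Rejected girlPref boyPref b g) : ∃ b', Engaged girlPref boyPref b' g := by
  obtain @⟨_, suitor, _, -, hsuitor⟩ := hrej
  obtain ⟨best, hbest, hmin⟩ := (IsWellFounded.wf (r := girlPref g)).has_min
    {b' | Proposes girlPref boyPref b' g} ⟨suitor, hsuitor⟩
  refine ⟨best, hbest, ?_⟩
  rintro ⟨hpref, hproposes⟩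
  exact hmin _ hproposes hpref

theorem exists_engaged_of_not_rejected [∀ b, IsWellFounded G (boyPref b)]
    (h : ¬ Rejected girlPref boyPref b g) : ∃ g', Engaged girlPref boyPref b g' := by
  obtain ⟨best, hbest, hmin⟩ := (IsWellFounded.wf (r := boyPref b)).has_min
    {g' | ¬ Rejected girlPref boyPref b g'} ⟨g, h⟩
  exact ⟨best, fun g' hg' => not_not.mp fun hnot => hmin g' hnot hg', hbest⟩

theorem exists_not_rejected [Finite B] [∀ g, IsWellFounded B (girlPref g)]
    [∀ b, Std.Trichotomous (boyPref b)] (hcard : Nat.card G = Nat.card B) (b : B) :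
    ∃ g, ¬ Rejected girlPref boyPref b g := by
  by_contra! hrej
  choose fiance hfiance using fun g => (hrej g).exists_engaged
  have hinj : Function.Injective fiance := fun g g' heq =>
    (hfiance g).girl_unique (heq ▸ hfiance g')
  have hbij : Function.Bijective fiance :=
    (Nat.bijective_iff_injective_and_card fiance).mpr ⟨hinj, hcard⟩
  obtain ⟨g, rfl⟩ := hbij.surjective b
  exact (hfiance g).not_rejected (hrej g)

theorem exists_equiv_forall_engaged [Finite G] [Finite B]
    [∀ g, IsStrictTotalOrder B (girlPref g)] [∀ b, IsStrictTotalOrder G (boyPref b)]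
    (hcard : Nat.card G = Nat.card B) :
    ∃ M : G ≃ B, ∀ b, Engaged girlPref boyPref b (M.symm b) := by
  have (g : G) : IsWellFounded B (girlPref g) := ⟨Finite.wellFounded_of_trans_of_irrefl _⟩
  have (b : B) : IsWellFounded G (boyPref b) := ⟨Finite.wellFounded_of_trans_of_irrefl _⟩
  have hengaged (b : B) : ∃ g, Engaged girlPref boyPref b g :=
    let ⟨_, hnot⟩ := exists_not_rejected hcard b
    exists_engaged_of_not_rejected hnot
  choose fiancee hfiancee using hengaged
  have hinj : Function.Injective fiancee := fun b b' heq =>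
    (hfiancee b).boy_unique (heq ▸ hfiancee b')
  have hbij : Function.Bijective fiancee :=
    (Nat.bijective_iff_injective_and_card fiancee).mpr ⟨hinj, hcard.symm⟩
  exact ⟨(Equiv.ofBijective fiancee hbij).symm, hfiancee⟩

end DeferredAcceptance

theorem exists_boy_optimal_stable_matching_general {G B : Type*} [Finite G] [Finite B]
    (hcard : Nat.card G = Nat.card B)
    (girlPref : G → B → B → Prop) [∀ g, IsStrictTotalOrder B (girlPref g)]
    (boyPref : B → G → G → Prop) [∀ b, IsStrictTotalOrder G (boyPref b)] :
    ∃ M₀ : G ≃ B, IsStable girlPref boyPref M₀ ∧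
      ∀ M : G ≃ B, IsStable girlPref boyPref M →
        (∀ b, boyPref b (M₀.symm b) (M.symm b) ∨ M₀.symm b = M.symm b) ∧
        (∀ g, girlPref g (M g) (M₀ g) ∨ M g = M₀ g) := by
  obtain ⟨M₀, hM₀⟩ :=
    exists_equiv_forall_engaged (girlPref := girlPref) (boyPref := boyPref) hcard
  refine ⟨M₀, isStable_of_forall_engaged hM₀, fun M hM => ?_⟩
  have hboys (b : B) := (hM₀ b).boyPref_or_eq_of_isStable hM
  exact ⟨hboys, hM.girlPref_or_eq_of_forall_boyPref_or_eq hboys⟩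

section RankedPreferences

variable {n : ℕ} (P : PrefProfile n)

instance isStrictTotalOrder_girlPrefers (g : Fin n) :
    IsStrictTotalOrder (Fin n) (GirlPrefers P g) :=
  (RelEmbedding.preimage (P.1 g).toEmbedding (· < ·)).isStrictTotalOrder

instance isStrictTotalOrder_boyPrefers (b : Fin n) :
    IsStrictTotalOrder (Fin n) (BoyPrefers P b) :=
  (RelEmbedding.preimage (P.2 b).toEmbedding (· < ·)).isStrictTotalOrder

theorem isStableMatching_iff_isStable (M : Fin n ≃ Fin n) :
    IsStableMatching P M ↔ IsStable (GirlPrefers P) (BoyPrefers P) M := by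
  constructor
  · intro hM g b hgirl hboy
    exact hM ⟨g, b, ne_of_irrefl hgirl, hgirl, hboy⟩
  · rintro hM ⟨g, b, -, hgirl, hboy⟩
    exact hM g b hgirl hboy

end RankedPreferences

/-- **Boy-optimal / girl-pessimal stable matching.** For every `n ≥ 1` and
every preference profile, there is a stable matching `M₀` such that for every
stable matching `M`: (i) every boy `b` weakly prefers his partner in `M₀` to
his partner in `M`, and (ii) every girl `g` weakly prefers her partner in `M`
to her partner in `M₀`. -/
theorem exists_boy_optimal_stable_matching (n : ℕ) (hn : 1 ≤ n) (P : PrefProfile n) :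
    ∃ M₀ : Fin n ≃ Fin n, IsStableMatching P M₀ ∧
      ∀ M : Fin n ≃ Fin n, IsStableMatching P M →
        (∀ b : Fin n, BoyPrefers P b (M₀.symm b) (M.symm b) ∨ M₀.symm b = M.symm b) ∧
        (∀ g : Fin n, GirlPrefers P g (M g) (M₀ g) ∨ M g = M₀ g) := by
  simp only [isStableMatching_iff_isStable]
  exact exists_boy_optimal_stable_matching_general rfl (GirlPrefers P) (BoyPrefers P)
end

section
/- Fix $n \geq 1$, a preference profile for $n$ girls and $n$ boys, a girl $g$, and a boy $s$ that is a stable husband of $g$. Then there exists a stable matching $M^*$ with $M^*\,g = s$ such that for every stable matching $M$ with $M\,g = s$ and every boy $b$, boy $b$ weakly prefers his partner $(M^*)^{-1}\,b$ in $M^*$ to his partner $M^{-1}\,b$ in $M$. That is, among all stable matchings pairing $g$ with $s$, there is one that simultaneously gives every boy his best possible partner. -/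
/-! The boys' ranks of their partners embed matchings into the lattice `Fin n → Fin n`. If every boy
picks the better of his partners in two stable matchings, no two boys pick the same girl and the
outcome is again a stable matching (Conway), in which every pair common to both matchings survives.
So the rank vectors of the stable matchings pairing `g` with `s` are closed under infima, and such
a finite nonempty set has a least element. -/

theorem exists_isLeast_of_infClosed {α : Type*} [SemilatticeInf α] {S : Set α}
    (hinf : InfClosed S) (hfin : S.Finite) (hne : S.Nonempty) : ∃ a, IsLeast S a := by
  have hne' : hfin.toFinset.Nonempty := hfin.toFinset_nonempty.2 hne
  refine ⟨hfin.toFinset.inf' hne' id, ?_, fun _ ha ↦ ?_⟩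
  · exact hinf.finsetInf'_mem hne' fun _ ha ↦ hfin.mem_toFinset.1 ha
  · exact Finset.inf'_le id (hfin.mem_toFinset.2 ha)

section StableMatchings

variable {n : ℕ} {P : PrefProfile n} {M N : Fin n ≃ Fin n} {g b : Fin n}

theorem isStableMatching_iff :
    IsStableMatching P M ↔
      ∀ g b, P.1 g b < P.1 g (M g) → P.2 b (M.symm b) ≤ P.2 b g := by
  refine ⟨fun hM g b hgb ↦ ?_, fun hM ⟨g, b, _, hgb, hbg⟩ ↦ (hM g b hgb).not_gt hbg⟩
  by_contra! hbg
  exact hM ⟨g, b, fun hb ↦ hgb.ne (congrArg (P.1 g) hb), hgb, hbg⟩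

theorem IsStableMatching.apply_eq_of_le_of_le (hM : IsStableMatching P M)
    (hgb : P.1 g b ≤ P.1 g (M g)) (hbg : P.2 b g ≤ P.2 b (M.symm b)) : M g = b := by
  rcases hgb.lt_or_eq with hlt | heq
  · have hrank : P.2 b g = P.2 b (M.symm b) :=
      hbg.antisymm (isStableMatching_iff.1 hM g b hlt)
    exact M.eq_symm_apply.1 ((P.2 b).injective hrank)
  · exact ((P.1 g).injective heq).symm

theorem IsStableMatching.apply_eq_apply_of_le_of_le (hM : IsStableMatching P M)
    (hN : IsStableMatching P N) (hMg : P.2 (M g) g ≤ P.2 (M g) (N.symm (M g)))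
    (hNg : P.2 (N g) g ≤ P.2 (N g) (M.symm (N g))) : M g = N g := by
  rcases le_total (P.1 g (M g)) (P.1 g (N g)) with hle | hle
  · exact (hN.apply_eq_of_le_of_le hle hMg).symm
  · exact hM.apply_eq_of_le_of_le hle hNg

/-- The rank vector of a matching: how each boy ranks his partner, with `0` for his favorite girl.
A pointwise smaller vector is a matching that every boy weakly prefers. -/
def boyRanks (P : PrefProfile n) (M : Fin n ≃ Fin n) : Fin n → Fin n :=
  fun b ↦ P.2 b (M.symm b)

/-- The girl boy `b` prefers among his partners in `M` and `N`, given as the girl whose rank is the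
smaller of the two. -/
def boyChoice (P : PrefProfile n) (M N : Fin n ≃ Fin n) (b : Fin n) : Fin n :=
  (P.2 b).symm ((boyRanks P M ⊓ boyRanks P N) b)

theorem rank_boyChoice (P : PrefProfile n) (M N : Fin n ≃ Fin n) (b : Fin n) :
    P.2 b (boyChoice P M N b) = (boyRanks P M ⊓ boyRanks P N) b :=
  (P.2 b).apply_symm_apply _

theorem rank_boyChoice_le_left (P : PrefProfile n) (M N : Fin n ≃ Fin n) (b : Fin n) :
    P.2 b (boyChoice P M N b) ≤ P.2 b (M.symm b) :=
  (rank_boyChoice P M N b).trans_le inf_le_left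

theorem rank_boyChoice_le_right (P : PrefProfile n) (M N : Fin n ≃ Fin n) (b : Fin n) :
    P.2 b (boyChoice P M N b) ≤ P.2 b (N.symm b) :=
  (rank_boyChoice P M N b).trans_le inf_le_right

theorem boyChoice_eq_or_eq (P : PrefProfile n) (M N : Fin n ≃ Fin n) (b : Fin n) :
    boyChoice P M N b = M.symm b ∨ boyChoice P M N b = N.symm b :=
  (min_choice (boyRanks P M b) (boyRanks P N b)).imp
    (fun h ↦ (P.2 b).injective ((rank_boyChoice P M N b).trans h))
    (fun h ↦ (P.2 b).injective ((rank_boyChoice P M N b).trans h))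

theorem eq_apply_or_eq_apply_of_boyChoice_eq (hb : boyChoice P M N b = g) :
    b = M g ∨ b = N g := by
  subst hb
  exact (boyChoice_eq_or_eq P M N b).imp
    (fun h ↦ M.symm_apply_eq.1 h.symm) (fun h ↦ N.symm_apply_eq.1 h.symm)

theorem IsStableMatching.apply_eq_apply_of_boyChoice_eq (hM : IsStableMatching P M)
    (hN : IsStableMatching P N) (hMg : boyChoice P M N (M g) = g)
    (hNg : boyChoice P M N (N g) = g) : M g = N g := by
  apply hM.apply_eq_apply_of_le_of_le hN
  · simpa only [hMg] using rank_boyChoice_le_right P M N (M g)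
  · simpa only [hNg] using rank_boyChoice_le_left P M N (N g)

theorem IsStableMatching.boyChoice_injective (hM : IsStableMatching P M)
    (hN : IsStableMatching P N) : Function.Injective (boyChoice P M N) := by
  intro b b' heq
  obtain ⟨g, hg⟩ : ∃ g, boyChoice P M N b = g := ⟨_, rfl⟩
  have hg' : boyChoice P M N b' = g := heq.symm.trans hg
  rcases eq_apply_or_eq_apply_of_boyChoice_eq hg with rfl | rfl <;>
    rcases eq_apply_or_eq_apply_of_boyChoice_eq hg' with rfl | rfl
  · rfl
  · exact hM.apply_eq_apply_of_boyChoice_eq hN hg hg'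
  · exact (hM.apply_eq_apply_of_boyChoice_eq hN hg' hg).symm
  · rfl

/-- The join of two stable matchings in the boys' preference order: every boy gets the better of
his two partners. -/
noncomputable def boyJoin (hM : IsStableMatching P M) (hN : IsStableMatching P N) :
    Fin n ≃ Fin n :=
  (Equiv.ofBijective (boyChoice P M N)
    (Finite.injective_iff_bijective.1 (hM.boyChoice_injective hN))).symm

theorem boyJoin_symm_apply (hM : IsStableMatching P M) (hN : IsStableMatching P N) (b : Fin n) :
    (boyJoin hM hN).symm b = boyChoice P M N b :=
  rfl

theorem boyRanks_boyJoin (hM : IsStableMatching P M) (hN : IsStableMatching P N) :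
    boyRanks P (boyJoin hM hN) = boyRanks P M ⊓ boyRanks P N :=
  funext (rank_boyChoice P M N)

theorem boyJoin_apply_eq_or_eq (hM : IsStableMatching P M) (hN : IsStableMatching P N)
    (g : Fin n) : boyJoin hM hN g = M g ∨ boyJoin hM hN g = N g :=
  eq_apply_or_eq_apply_of_boyChoice_eq ((boyJoin hM hN).symm_apply_apply g)

theorem isStableMatching_boyJoin (hM : IsStableMatching P M) (hN : IsStableMatching P N) :
    IsStableMatching P (boyJoin hM hN) := by
  refine isStableMatching_iff.2 fun g b hgb ↦ ?_
  rw [boyJoin_symm_apply]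
  rcases boyJoin_apply_eq_or_eq hM hN g with hg | hg <;> rw [hg] at hgb
  · exact (rank_boyChoice_le_left P M N b).trans (isStableMatching_iff.1 hM g b hgb)
  · exact (rank_boyChoice_le_right P M N b).trans (isStableMatching_iff.1 hN g b hgb)

theorem infClosed_boyRanks_image_stable_fixing_pair (P : PrefProfile n) (g s : Fin n) :
    InfClosed (boyRanks P '' {M | IsStableMatching P M ∧ M g = s}) := by
  rintro _ ⟨M, ⟨hM, hMg⟩, rfl⟩ _ ⟨N, ⟨hN, hNg⟩, rfl⟩
  have hjoin : boyJoin hM hN g = s :=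
    (boyJoin_apply_eq_or_eq hM hN g).elim (·.trans hMg) (·.trans hNg)
  exact ⟨boyJoin hM hN, ⟨isStableMatching_boyJoin hM hN, hjoin⟩, boyRanks_boyJoin hM hN⟩

theorem boyPrefers_or_eq_of_boyRanks_le (h : boyRanks P M ≤ boyRanks P N) (b : Fin n) :
    BoyPrefers P b (M.symm b) (N.symm b) ∨ M.symm b = N.symm b :=
  (h b).lt_or_eq.imp_right fun heq ↦ (P.2 b).injective heq

end StableMatchings

/-- **Boy-optimality within the stable matchings pairing `g` with `s`.**
If `s` is a stable husband of girl `g` (some stable matching pairs `g` with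
`s`), then among all stable matchings pairing `g` with `s` there is one, `M⋆`,
that simultaneously gives every boy his best possible partner: every boy `b`
weakly prefers his partner in `M⋆` to his partner in any stable matching `M`
with `M g = s`. -/
theorem exists_boy_optimal_stable_matching_fixing_pair
    (n : ℕ) (hn : 1 ≤ n) (P : PrefProfile n) (g s : Fin n)
    (hs : ∃ M : Fin n ≃ Fin n, IsStableMatching P M ∧ M g = s) :
    ∃ Mstar : Fin n ≃ Fin n, IsStableMatching P Mstar ∧ Mstar g = s ∧
      ∀ M : Fin n ≃ Fin n, IsStableMatching P M → M g = s →
        ∀ b : Fin n, BoyPrefers P b (Mstar.symm b) (M.symm b) ∨ Mstar.symm b = M.symm b := by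
  obtain ⟨M₀, hM₀⟩ := hs
  obtain ⟨_, ⟨Mstar, ⟨hstable, hpair⟩, rfl⟩, hleast⟩ :=
    exists_isLeast_of_infClosed (infClosed_boyRanks_image_stable_fixing_pair P g s)
      (Set.toFinite _) ⟨_, M₀, hM₀, rfl⟩
  exact ⟨Mstar, hstable, hpair, fun M hM hMg ↦
    boyPrefers_or_eq_of_boyRanks_le (hleast ⟨M, ⟨hM, hMg⟩, rfl⟩)⟩
end

section
/- Fix constants $c$ and $C$ with $0 < c < 1/2$ and $C > 1$. For each $n \geq 1$, consider a uniformly random preference profile for $n$ girls and $n$ boys, and let $H_n$ be the number of stable husbands of a fixed girl (say girl $0$). Then $\Pr\bigl(c \ln n \leq H_n \leq C \ln n\bigr) \to 1$ as $n \to \infty$. -/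
/-- The number of stable husbands of girl `g`: the number of boys `b` such that
some stable matching pairs `g` with `b`. -/
noncomputable def stableHusbandCount (n : ℕ) (P : PrefProfile n) (g : Fin n) : ℕ :=
  Nat.card {b : Fin n // ∃ M : Fin n ≃ Fin n, IsStableMatching P M ∧ M g = b}

/-!
Let girl `g` refuse every proposal in the boy-proposing Gale–Shapley process, so that the process
never stops and she dismisses the boys one after the other. The husband of `g` in a stable matching
is, at the moment when she dismisses him, the best boy she has dismissed so far: her stable husbands
are records of her ranking read in the order of dismissal. Conversely, such a record is a stable
husband as soon as all other girls have been proposed to, provided that it does not come after her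
best stable husband. The order of dismissal does not depend on the list of `g`, so the ranks in this
order form a uniformly random permutation. Its records occur independently, at position `i` (counted
from `0`) with probability `1 / (i + 1)`, hence their number concentrates around `log n` by
Chebyshev's inequality.

The records that need not be stable husbands sit at the first polylogarithmically many positions and
at the positions beyond `n` divided by a polylogarithmic factor, and they are too few to matter.
Both bounds come from the principle of deferred decisions: the part of a boy's list which the
process has not yet read is exchangeable. Therefore `2 n log n` proposals reach every girl with high
probability, and only polylogarithmically many of them go to `g`. The same count with the sides
exchanged shows that the best stable husband of `g` is among her polylogarithmically many favourite
boys, so she cannot expect to dismiss him early.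
-/

namespace StableMarriage

open Finset
open scoped BigOperators

/-! ### Uniform probability on a finite type -/

section Probability

variable {α β ι : Type*} [Fintype α] [Fintype β]

open Classical in
/-- The probability that a uniformly random element of the finite type `α` satisfies `p`. -/
noncomputable def prob (p : α → Prop) : ℝ := 𝔼 a, if p a then 1 else 0

lemma prob_eq_expect (p : α → Prop) [DecidablePred p] : prob p = 𝔼 a, if p a then 1 else 0 := by
  unfold prob
  congr!

lemma prob_eq_card_div_card (p : α → Prop) : prob p = Nat.card {a // p a} / Nat.card α := by
  classical
  rw [prob_eq_expect, Fintype.expect_eq_sum_div_card, Finset.sum_boole, Nat.card_eq_fintype_card,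
    Nat.card_eq_fintype_card, Fintype.card_subtype]

lemma prob_nonneg (p : α → Prop) : 0 ≤ prob p := by
  classical
  exact expect_nonneg fun a _ => by split_ifs <;> norm_num

lemma prob_mono {p q : α → Prop} (h : ∀ a, p a → q a) : prob p ≤ prob q := by
  classical
  rw [prob_eq_expect, prob_eq_expect]
  refine expect_le_expect fun a _ => ?_
  by_cases hp : p a
  · simp [hp, h a hp]
  · simp only [hp, if_false]
    split_ifs <;> norm_num

lemma prob_congr {p q : α → Prop} (h : ∀ a, p a ↔ q a) : prob p = prob q := by
  simp only [funext fun a => propext (h a)]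

lemma prob_not [Nonempty α] (p : α → Prop) : prob (fun a => ¬ p a) = 1 - prob p := by
  classical
  rw [prob_eq_expect, prob_eq_expect, eq_sub_iff_add_eq, ← expect_add_distrib,
    ← Fintype.expect_one (ι := α) (M := ℝ)]
  exact expect_congr rfl fun a _ => by by_cases p a <;> simp [*]

lemma prob_le_one (p : α → Prop) : prob p ≤ 1 := by
  classical
  rcases isEmpty_or_nonempty α with _ | _
  · simp [prob_eq_expect]
  · linarith [prob_not p, prob_nonneg fun a => ¬ p a]

lemma expect_card_filter (s : Finset ι) (p : ι → α → Prop) [∀ a, DecidablePred (p · a)] :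
    𝔼 a, (#{i ∈ s | p i a} : ℝ) = ∑ i ∈ s, prob (p i) := by
  classical
  simp only [prob_eq_expect, ← expect_sum_comm, Finset.sum_boole]

lemma prob_exists_le (s : Finset ι) (p : ι → α → Prop) :
    prob (fun a => ∃ i ∈ s, p i a) ≤ ∑ i ∈ s, prob (p i) := by
  classical
  rw [← expect_card_filter, prob_eq_expect]
  refine expect_le_expect fun a _ => ?_
  split_ifs with h
  · obtain ⟨i, hi, hp⟩ := h
    exact_mod_cast card_pos.2 ⟨i, mem_filter.2 ⟨hi, hp⟩⟩
  · positivity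

lemma prob_or_le (p q : α → Prop) : prob (fun a => p a ∨ q a) ≤ prob p + prob q := by
  simpa [add_comm] using prob_exists_le univ fun (i : Bool) a => cond i (q a) (p a)

lemma prob_add_prob_le_of_disjoint {p q r : α → Prop} (hp : ∀ a, p a → r a) (hq : ∀ a, q a → r a)
    (hpq : ∀ a, p a → ¬ q a) : prob p + prob q ≤ prob r := by
  classical
  rw [prob_eq_expect, prob_eq_expect, prob_eq_expect, ← expect_add_distrib]
  refine expect_le_expect fun a _ => ?_
  by_cases ha : p a
  · simp [ha, hp a ha, hpq a ha]
  · by_cases ha' : q a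
    · simp [ha, ha', hq a ha']
    · simp only [ha, ha', if_false, add_zero]
      split_ifs <;> norm_num

lemma sum_prob_le_one_of_unique (s : Finset ι) (p : ι → α → Prop)
    (h : ∀ a, ∀ i ∈ s, ∀ j ∈ s, p i a → p j a → i = j) : ∑ i ∈ s, prob (p i) ≤ 1 := by
  classical
  rw [← expect_card_filter]
  rcases isEmpty_or_nonempty α with _ | _
  · simp
  refine expect_le univ_nonempty fun a _ => ?_
  have hle : #{i ∈ s | p i a} ≤ 1 := card_le_one.2 fun i hi j hj =>
    h a i (mem_filter.1 hi).1 j (mem_filter.1 hj).1 (mem_filter.1 hi).2 (mem_filter.1 hj).2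
  exact_mod_cast hle

lemma prob_le_expect_div {X : α → ℝ} (hX : ∀ a, 0 ≤ X a) {r : ℝ} (hr : 0 < r) :
    prob (fun a => r ≤ X a) ≤ (𝔼 a, X a) / r := by
  classical
  rw [prob_eq_expect, expect_div]
  refine expect_le_expect fun a _ => ?_
  split_ifs with h
  · rwa [one_le_div hr]
  · exact div_nonneg (hX a) hr.le

lemma prob_comp_equiv (e : α ≃ β) (p : β → Prop) : prob (fun a => p (e a)) = prob p := by
  classical
  simp only [prob_eq_expect]
  exact Fintype.expect_equiv e _ _ fun _ => rfl

lemma prob_le_of_leftInvOn {p q : α → Prop} (φ ψ : α → α) (hφ : ∀ a, p a → q (φ a))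
    (hψ : ∀ a, p a → ψ (φ a) = a) : prob p ≤ prob q := by
  simp only [prob_eq_card_div_card]
  refine div_le_div_of_nonneg_right (Nat.cast_le.2 ?_) (Nat.cast_nonneg _)
  refine Nat.card_le_card_of_injective (fun a : {a // p a} => (⟨φ a, hφ a a.2⟩ : {a // q a})) ?_
  intro a b hab
  apply Subtype.ext
  rw [← hψ a a.2, ← hψ b b.2, show φ a = φ b from congrArg Subtype.val hab]

/-- If `u a b` replaces the component `v a` of `a` by `b`, then resampling this component does not
change the uniform distribution. -/
lemma prob_eq_expect_prob_update (u : α → β → α) (v : α → β) (huv : ∀ a b, u (u a b) (v a) = a)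
    (hvu : ∀ a b, v (u a b) = b) [Nonempty β] (p : α → Prop) :
    prob p = 𝔼 a, prob (fun b => p (u a b)) := by
  classical
  have hswap : Function.Involutive fun x : α × β => (u x.1 x.2, v x.1) := fun x => by
    simp only [huv, hvu]
  calc prob p = 𝔼 x : α × β, if p x.1 then (1 : ℝ) else 0 := by
        rw [prob_eq_expect, ← univ_product_univ, expect_product]
        exact expect_congr rfl fun a _ => (Fintype.expect_const _).symm
    _ = 𝔼 x : α × β, if p (u x.1 x.2) then (1 : ℝ) else 0 :=
        (Fintype.expect_equiv hswap.toPerm _ _ fun _ => rfl).symm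
    _ = 𝔼 a, prob (fun b => p (u a b)) := by
        rw [← univ_product_univ, expect_product]
        simp only [prob_eq_expect]

lemma prob_le_of_forall_prob_update_le [Nonempty α] [Nonempty β] (u : α → β → α) (v : α → β)
    (huv : ∀ a b, u (u a b) (v a) = a) (hvu : ∀ a b, v (u a b) = b) {p : α → Prop} {ε : ℝ}
    (h : ∀ a, prob (fun b => p (u a b)) ≤ ε) : prob p ≤ ε := by
  rw [prob_eq_expect_prob_update u v huv hvu]
  exact expect_le univ_nonempty fun a _ => h a

section Chebyshev

variable {S : Finset ι} {p : ι → α → Prop} [∀ a, DecidablePred (p · a)]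

lemma expect_card_filter_sq_le (h : ∀ i ∈ S, ∀ j ∈ S, i ≠ j →
      prob (fun a => p i a ∧ p j a) ≤ prob (p i) * prob (p j)) :
    𝔼 a, (#{i ∈ S | p i a} : ℝ) ^ 2 ≤ (∑ i ∈ S, prob (p i)) ^ 2 + ∑ i ∈ S, prob (p i) := by
  classical
  have hsq (a : α) : (#{i ∈ S | p i a} : ℝ) ^ 2 = #{x ∈ S ×ˢ S | p x.1 a ∧ p x.2 a} := by
    rw [filter_product (p · a) (p · a), card_product, Nat.cast_mul, sq]
  calc 𝔼 a, (#{i ∈ S | p i a} : ℝ) ^ 2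
      = ∑ i ∈ S, ∑ j ∈ S, prob (fun a => p i a ∧ p j a) := by
        simp only [hsq]
        rw [expect_card_filter (S ×ˢ S) fun x a => p x.1 a ∧ p x.2 a, sum_product]
    _ ≤ ∑ i ∈ S, ∑ j ∈ S, (prob (p i) * prob (p j) + if i = j then prob (p i) else 0) := by
        refine sum_le_sum fun i hi => sum_le_sum fun j hj => ?_
        split_ifs with hij
        · subst hij
          simpa only [and_self] using
            le_add_of_nonneg_left (mul_nonneg (prob_nonneg (p i)) (prob_nonneg (p i)))
        · simpa only [add_zero] using h i hi j hj hij
    _ = (∑ i ∈ S, prob (p i)) ^ 2 + ∑ i ∈ S, prob (p i) := by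
        simp [sum_add_distrib, ← sum_mul_sum, sq]

lemma prob_le_abs_card_sub_le [Nonempty α] (h : ∀ i ∈ S, ∀ j ∈ S, i ≠ j →
      prob (fun a => p i a ∧ p j a) ≤ prob (p i) * prob (p j)) {r : ℝ} (hr : 0 < r) :
    prob (fun a => r ≤ |(#{i ∈ S | p i a} : ℝ) - ∑ i ∈ S, prob (p i)|) ≤
      (∑ i ∈ S, prob (p i)) / r ^ 2 := by
  set μ := ∑ i ∈ S, prob (p i) with hμ
  have hvar : 𝔼 a, ((#{i ∈ S | p i a} : ℝ) - μ) ^ 2 ≤ μ := calc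
    𝔼 a, ((#{i ∈ S | p i a} : ℝ) - μ) ^ 2
      = 𝔼 a, (#{i ∈ S | p i a} : ℝ) ^ 2 - 2 * μ * 𝔼 a, (#{i ∈ S | p i a} : ℝ) + μ ^ 2 := by
        rw [mul_expect, ← expect_sub_distrib, ← Fintype.expect_const (ι := α) (μ ^ 2),
          ← expect_add_distrib]
        exact expect_congr rfl fun a _ => by ring
    _ ≤ μ := by
        rw [expect_card_filter, ← hμ]
        linarith [expect_card_filter_sq_le h]
  calc prob (fun a => r ≤ |(#{i ∈ S | p i a} : ℝ) - μ|)
      ≤ prob (fun a => r ^ 2 ≤ ((#{i ∈ S | p i a} : ℝ) - μ) ^ 2) :=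
        prob_mono fun a ha => by simpa only [sq_abs] using pow_le_pow_left₀ hr.le ha 2
    _ ≤ (𝔼 a, ((#{i ∈ S | p i a} : ℝ) - μ) ^ 2) / r ^ 2 :=
        prob_le_expect_div (fun a => sq_nonneg _) (by positivity)
    _ ≤ μ / r ^ 2 := by gcongr

end Chebyshev

end Probability

/-! ### Records of a random permutation -/

section Records

variable {n : ℕ}

/-- Position `i` is a (left-to-right minimum) record of `τ`: no earlier value is smaller. -/
def IsRecord (τ : Equiv.Perm (Fin n)) (i : Fin n) : Prop := ∀ j ≤ i, τ i ≤ τ j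

instance (τ : Equiv.Perm (Fin n)) : DecidablePred (IsRecord τ) := fun i =>
  inferInstanceAs (Decidable (∀ j ≤ i, τ i ≤ τ j))

lemma swap_le_iff_of_le {i k m : Fin n} (hi : i ≤ m) (hk : k ≤ m) (j : Fin n) :
    Equiv.swap i k j ≤ m ↔ j ≤ m := by
  rw [Equiv.swap_apply_def]
  split_ifs with hji hjk
  · exact iff_of_true hk (hji ▸ hi)
  · exact iff_of_true hi (hjk ▸ hk)
  · rfl

/-- The least of the values `τ 0, …, τ i` is equally likely to sit at each of these positions. -/
lemma succ_mul_prob_and_isRecord (i : Fin n) (T : Equiv.Perm (Fin n) → Prop)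
    (hT : ∀ τ, ∀ k ≤ i, T (τ * Equiv.swap i k) ↔ T τ) :
    ((i : ℝ) + 1) * prob (fun τ => T τ ∧ IsRecord τ i) = prob T := by
  classical
  have hshift (k : Fin n) (hk : k ∈ Iic i) :
      prob (fun τ => T τ ∧ ∀ j ≤ i, τ k ≤ τ j) = prob (fun τ => T τ ∧ IsRecord τ i) := by
    rw [← prob_comp_equiv (Equiv.mulRight (Equiv.swap i k)) fun τ => T τ ∧ IsRecord τ i]
    refine prob_congr fun τ => ?_
    simp only [Equiv.coe_mulRight, hT τ k (mem_Iic.1 hk), IsRecord, Equiv.Perm.mul_apply,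
      Equiv.swap_apply_left]
    refine and_congr_right fun _ => (Equiv.swap i k).forall_congr fun {j} => ?_
    rw [swap_le_iff_of_le le_rfl (mem_Iic.1 hk), Equiv.swap_apply_self]
  have hunique (τ : Equiv.Perm (Fin n)) :
      #{k ∈ Iic i | T τ ∧ ∀ j ≤ i, τ k ≤ τ j} = if T τ then 1 else 0 := by
    split_ifs with hτ
    · obtain ⟨k, hk, hmin⟩ := exists_min_image (Iic i) τ ⟨i, mem_Iic.2 le_rfl⟩
      refine card_eq_one.2 ⟨k, ?_⟩
      ext l
      simp only [mem_filter, mem_Iic, mem_singleton, hτ, true_and] at hk hmin ⊢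
      exact ⟨fun ⟨hl, hlmin⟩ => τ.injective (le_antisymm (hlmin k hk) (hmin l hl)),
        fun h => h ▸ ⟨hk, hmin⟩⟩
    · simp [hτ]
  calc ((i : ℝ) + 1) * prob (fun τ => T τ ∧ IsRecord τ i)
      = ∑ k ∈ Iic i, prob (fun τ => T τ ∧ ∀ j ≤ i, τ k ≤ τ j) := by
        rw [sum_congr rfl hshift, sum_const, Fin.card_Iic, nsmul_eq_mul, Nat.cast_add_one]
    _ = prob T := by
        rw [← expect_card_filter, prob_eq_expect]
        simp only [hunique, Nat.cast_ite, Nat.cast_one, Nat.cast_zero]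

lemma prob_isRecord (i : Fin n) :
    prob (fun τ : Equiv.Perm (Fin n) => IsRecord τ i) = 1 / ((i : ℝ) + 1) := by
  have hone : prob (fun _ : Equiv.Perm (Fin n) => True) = 1 := by simp [prob]
  have hmul := succ_mul_prob_and_isRecord i (fun _ => True) fun _ _ _ => Iff.rfl
  simp only [true_and, hone] at hmul
  rw [eq_div_iff (by positivity), mul_comm, hmul]

lemma prob_isRecord_and_isRecord {i j : Fin n} (hij : i ≠ j) :
    prob (fun τ : Equiv.Perm (Fin n) => IsRecord τ i ∧ IsRecord τ j) =
      prob (fun τ : Equiv.Perm (Fin n) => IsRecord τ i) *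
        prob (fun τ : Equiv.Perm (Fin n) => IsRecord τ j) := by
  wlog h : i < j generalizing i j
  · rw [mul_comm, ← this hij.symm (hij.lt_or_gt.resolve_left h)]
    simp only [and_comm]
  have hinv (τ : Equiv.Perm (Fin n)) (k : Fin n) (hk : k ≤ i) :
      IsRecord (τ * Equiv.swap i k) j ↔ IsRecord τ j := by
    simp only [IsRecord, Equiv.Perm.mul_apply,
      Equiv.swap_apply_of_ne_of_ne h.ne' (hk.trans_lt h).ne']
    refine (Equiv.swap i k).forall_congr fun {l} => ?_
    rw [swap_le_iff_of_le h.le (hk.trans h.le)]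
  have hmul := succ_mul_prob_and_isRecord i (IsRecord · j) hinv
  rw [prob_isRecord i, ← hmul]
  simp only [and_comm (b := IsRecord _ i)]
  field_simp

/-- The number of records of `τ` at positions in `S`. -/
def recordCount (S : Finset (Fin n)) (τ : Equiv.Perm (Fin n)) : ℕ := #{i ∈ S | IsRecord τ i}

/-- The expected number of records at positions in `S`. -/
noncomputable def recordMean (S : Finset (Fin n)) : ℝ := ∑ i ∈ S, 1 / ((i : ℝ) + 1)

lemma prob_le_abs_recordCount_sub_le (S : Finset (Fin n)) {r : ℝ} (hr : 0 < r) :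
    prob (fun τ => r ≤ |(recordCount S τ : ℝ) - recordMean S|) ≤ recordMean S / r ^ 2 := by
  have hmean : recordMean S = ∑ i ∈ S, prob (IsRecord · i) := by
    simp only [recordMean, prob_isRecord]
  rw [hmean]
  exact prob_le_abs_card_sub_le (fun i _ j _ hij => (prob_isRecord_and_isRecord hij).le) hr

lemma recordMean_le (S : Finset (Fin n)) : recordMean S ≤ 1 + Real.log n := calc
  recordMean S ≤ recordMean univ :=
    sum_le_sum_of_subset_of_nonneg (subset_univ S) fun i _ _ => by positivity
  _ = harmonic n := by
    rw [recordMean, Fin.sum_univ_eq_sum_range (fun i : ℕ => 1 / ((i : ℝ) + 1)), harmonic]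
    push_cast
    simp only [one_div]
  _ ≤ 1 + Real.log n := harmonic_le_one_add_log n

/-- The positions `D, D + 1, …, L - 1`. -/
def window (n D L : ℕ) : Finset (Fin n) := {i : Fin n | D ≤ (i : ℕ) ∧ (i : ℕ) < L}

lemma log_sub_log_le_sum_Ico (D L : ℕ) :
    Real.log (L + 1) - Real.log (D + 1) ≤ ∑ i ∈ Ico D L, 1 / ((i : ℝ) + 1) := by
  rcases le_total L D with h | h
  · rw [Ico_eq_empty_of_le h, sum_empty, sub_nonpos]
    gcongr
  induction L, h using Nat.le_induction with
  | base => simp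
  | succ L hDL ih =>
    have hstep : Real.log (L + 1 + 1) - Real.log (L + 1) ≤ 1 / ((L : ℝ) + 1) := by
      rw [← Real.log_div (by positivity) (by positivity)]
      convert Real.log_le_sub_one_of_pos (by positivity : 0 < ((L : ℝ) + 1 + 1) / (L + 1)) using 1
      field_simp
      ring
    rw [sum_Ico_succ_top hDL]
    push_cast
    linarith

lemma log_sub_log_le_recordMean_window (D : ℕ) {L : ℕ} (hL : L ≤ n) :
    Real.log (L + 1) - Real.log (D + 1) ≤ recordMean (window n D L) := by
  refine (log_sub_log_le_sum_Ico D L).trans_eq ?_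
  refine sum_bij' (fun i hi => ⟨i, (mem_Ico.1 hi).2.trans_le hL⟩) (fun i _ => i) ?_ ?_ ?_ ?_ ?_
  all_goals simp [window]

end Records

/-! ### The proposal process -/

/-- The preferences of one side of the market: `f b h` is the position of `h` in the list of `b`. -/
abbrev Rankings (n : ℕ) := Fin n → Equiv.Perm (Fin n)

variable {n : ℕ}

section Stability

lemma isStableMatching_iff {G f : Rankings n} {M : Fin n ≃ Fin n} :
    IsStableMatching (G, f) M ↔ ∀ h b, G h b < G h (M h) → f b (M.symm b) ≤ f b h := by
  simp only [IsStableMatching, GirlPrefers, BoyPrefers, not_exists, not_and, not_lt]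
  exact forall₂_congr fun h b => ⟨fun hM hb => hM (fun e => hb.ne (e ▸ rfl)) hb, fun hM _ => hM⟩

lemma isStableMatching_swap {G f : Rankings n} {M : Fin n ≃ Fin n}
    (hM : IsStableMatching (G, f) M) : IsStableMatching (f, G) M.symm := by
  rw [isStableMatching_iff] at hM ⊢
  intro b h hb
  exact not_lt.1 fun hh => (hM h b hh).not_gt hb

lemma exists_isStableMatching_of_suitors {G f : Rankings n} {p : Fin n → ℕ}
    (hp : ∀ h, ∃ b, (f b h : ℕ) + 1 = p b ∧ ∀ b', (f b' h : ℕ) + 1 < p b' → G h b ≤ G h b') :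
    ∃ M, IsStableMatching (G, f) M ∧ ∀ b, (f b (M.symm b) : ℕ) + 1 = p b := by
  choose c hc hbest using hp
  have hinj : Function.Injective c := fun h h' e => by
    refine (f (c h)).injective (Fin.ext ?_)
    have := hc h'
    rw [← e, ← hc h] at this
    omega
  let M := Equiv.ofBijective c (Finite.injective_iff_bijective.1 hinj)
  have hM (b : Fin n) : (f b (M.symm b) : ℕ) + 1 = p b := by
    obtain ⟨h, rfl⟩ := M.surjective b
    rw [M.symm_apply_apply]
    exact hc h
  refine ⟨M, isStableMatching_iff.2 fun h b hb => not_lt.1 fun hf => ?_, hM⟩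
  exact (hbest h b (by have := hM b; have : (f b h : ℕ) < _ := hf; omega)).not_gt hb

end Stability

section ProposalAlgorithm

/-- After each boy `b` has proposed to the first `p b` girls of his list, and when the girls in `R`
refuse everybody, a boy is engaged if he is the favourite suitor of the girl he proposed to last. -/
def IsEngaged (R : Set (Fin n)) (G f : Rankings n) (p : Fin n → ℕ) (b : Fin n) : Prop :=
  ∃ h ∉ R, (f b h : ℕ) + 1 = p b ∧ ∀ b', (f b' h : ℕ) < p b' → G h b ≤ G h b'

open Classical in
/-- A boy who is not engaged, if there is one. -/
noncomputable def nextProposer (R : Set (Fin n)) (G f : Rankings n) (p : Fin n → ℕ) :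
    Option (Fin n) :=
  if h : ∃ b, ¬ IsEngaged R G f p b then some h.choose else none

/-- The number of proposals made by each boy up to time `t` in the Gale–Shapley process in which
the girls in `R` refuse everybody. One boy who is not engaged proposes at each step; a boy whose
list is exhausted may still be called on, and his count then exceeds `n`. -/
noncomputable def proposals (R : Set (Fin n)) (G f : Rankings n) : ℕ → Fin n → ℕ
  | 0, _ => 0
  | t + 1, b =>
    if nextProposer R G f (proposals R G f t) = some b then proposals R G f t b + 1
    else proposals R G f t b

/-- The boy who proposes between times `t` and `t + 1`. -/
noncomputable def proposer (R : Set (Fin n)) (G f : Rankings n) (t : ℕ) : Option (Fin n) :=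
  nextProposer R G f (proposals R G f t)

variable {R : Set (Fin n)} {G f : Rankings n} {p : Fin n → ℕ} {b q : Fin n} {s t : ℕ}

lemma not_isEngaged_of_nextProposer (h : nextProposer R G f p = some q) :
    ¬ IsEngaged R G f p q := by
  unfold nextProposer at h
  split_ifs at h with hex
  exact Option.some.inj h ▸ hex.choose_spec

lemma isEngaged_of_nextProposer_eq_none (h : nextProposer R G f p = none) (b : Fin n) :
    IsEngaged R G f p b := by
  unfold nextProposer at h
  split_ifs at h with hex
  exact not_not.1 (not_exists.1 hex b)

lemma exists_last_suitor_of_forall_isEngaged (H : ∀ b, IsEngaged R G f p b) (h : Fin n) :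
    h ∉ R ∧ ∃ b, (f b h : ℕ) + 1 = p b := by
  choose c hR hlast hbest using H
  have hinj : Function.Injective c := fun b b' e => by
    have hb := hbest b b' (by have := hlast b'; rw [← e] at this; omega)
    have hb' := hbest b' b (by have := hlast b; rw [e] at this; omega)
    exact (G (c b)).injective (le_antisymm hb (e ▸ hb'))
  obtain ⟨b, rfl⟩ := Finite.injective_iff_surjective.1 hinj h
  exact ⟨hR b, b, hlast b⟩

@[simp]
lemma proposals_zero (b : Fin n) : proposals R G f 0 b = 0 := rfl

lemma proposals_succ (t : ℕ) (b : Fin n) : proposals R G f (t + 1) b =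
    if proposer R G f t = some b then proposals R G f t b + 1 else proposals R G f t b := rfl

lemma proposals_succ_of_proposer (h : proposer R G f t = some b) :
    proposals R G f (t + 1) b = proposals R G f t b + 1 := by
  rw [proposals_succ, if_pos h]

lemma proposals_mono (b : Fin n) : Monotone fun t => proposals R G f t b :=
  monotone_nat_of_le_succ fun t => by
    rw [proposals_succ]
    split_ifs <;> omega

lemma sum_proposals_succ (t : ℕ) : ∑ b, proposals R G f (t + 1) b =
    ∑ b, proposals R G f t b + if proposer R G f t = none then 0 else 1 := by
  have hstep (b : Fin n) : proposals R G f (t + 1) b =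
      proposals R G f t b + if proposer R G f t = some b then 1 else 0 := by
    rw [proposals_succ]
    split_ifs <;> rfl
  simp only [hstep, sum_add_distrib]
  rcases proposer R G f t with _ | q <;> simp

lemma sum_proposals_le (t : ℕ) : ∑ b, proposals R G f t b ≤ t := by
  induction t with
  | zero => simp
  | succ t ih =>
    rw [sum_proposals_succ]
    split_ifs <;> omega

lemma sum_proposals_eq (hR : R.Nonempty) (t : ℕ) : ∑ b, proposals R G f t b = t := by
  obtain ⟨g, hg⟩ := hR
  induction t with
  | zero => simp
  | succ t ih =>
    rw [sum_proposals_succ, ih, if_neg]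
    exact fun hnone =>
      (exists_last_suitor_of_forall_isEngaged (isEngaged_of_nextProposer_eq_none hnone) g).1 hg

lemma exists_proposer_of_lt_proposals {v : ℕ} (h : v < proposals R G f t b) :
    ∃ s < t, proposer R G f s = some b ∧ proposals R G f s b = v := by
  induction t with
  | zero => simp at h
  | succ t ih =>
    by_cases hv : v < proposals R G f t b
    · obtain ⟨s, hs, hsb⟩ := ih hv
      exact ⟨s, by omega, hsb⟩
    · rw [proposals_succ] at h
      split_ifs at h with hb
      · exact ⟨t, by omega, hb, by omega⟩
      · exact absurd h hv

lemma eq_of_proposals_eq (hs : proposer R G f s = some b)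
    (ht : proposer R G f t = some b) (h : proposals R G f s b = proposals R G f t b) : s = t := by
  wlog hst : s ≤ t generalizing s t
  · exact (this ht hs h.symm (le_of_not_ge hst)).symm
  by_contra hne
  have := proposals_mono (R := R) (G := G) (f := f) b (show s + 1 ≤ t by omega)
  simp only [proposals_succ_of_proposer hs] at this
  omega

lemma exists_better_suitor_of_rejected {h : Fin n} (hR : h ∉ R)
    (hb : (f b h : ℕ) + 1 < proposals R G f t b) :
    ∃ b', (f b' h : ℕ) < proposals R G f t b' ∧ G h b' < G h b := by
  obtain ⟨s, hs, hprop, hlast⟩ := exists_proposer_of_lt_proposals hb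
  by_contra! hbest
  exact not_isEngaged_of_nextProposer hprop ⟨h, hR, hlast.symm, fun b' hb' =>
    hbest b' (hb'.trans_le (proposals_mono b' hs.le))⟩

lemma exists_favourite_suitor {h : Fin n} (hR : h ∉ R)
    (hprop : ∃ b, (f b h : ℕ) < proposals R G f t b) :
    ∃ b, (f b h : ℕ) + 1 = proposals R G f t b ∧
      ∀ b', (f b' h : ℕ) < proposals R G f t b' → G h b ≤ G h b' := by
  obtain ⟨b, hb, hmin⟩ := Set.exists_min_image {b | (f b h : ℕ) < proposals R G f t b} (G h)
    (Set.toFinite _) hprop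
  refine ⟨b, ?_, hmin⟩
  by_contra hne
  obtain ⟨b', hb', hlt⟩ := exists_better_suitor_of_rejected hR (lt_of_le_of_ne hb hne)
  exact (hmin b' hb').not_gt hlt

lemma exists_isStableMatching_of_all_proposed
    (hall : ∀ h, ∃ b, (f b h : ℕ) < proposals ∅ G f t b) :
    ∃ M, IsStableMatching (G, f) M ∧ ∑ b, (f b (M.symm b) : ℕ) ≤ t := by
  obtain ⟨M, hM, hrank⟩ := exists_isStableMatching_of_suitors (G := G) fun h =>
    (exists_favourite_suitor (Set.notMem_empty h) (hall h)).imp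
      fun b hb => ⟨hb.1, fun b' hb' => hb.2 b' (by omega)⟩
  refine ⟨M, hM, ?_⟩
  calc ∑ b, (f b (M.symm b) : ℕ) ≤ ∑ b, proposals ∅ G f t b :=
        sum_le_sum fun b _ => (Nat.le_succ _).trans (hrank b).le
    _ ≤ t := sum_proposals_le t

lemma isEngaged_of_isStableMatching {M : Fin n ≃ Fin n} (hM : IsStableMatching (G, f) M)
    (hp : ∀ b, p b ≤ f b (M.symm b) + 1) (hq : p q = f q (M.symm q) + 1) (hR : M.symm q ∉ R) :
    IsEngaged R G f p q := by
  refine ⟨M.symm q, hR, hq.symm, fun b hb => not_lt.1 fun hlt => ?_⟩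
  have hle := isStableMatching_iff.1 hM (M.symm q) b (by simpa using hlt)
  have heq : M.symm b = M.symm q := (f b).injective (le_antisymm hle (Fin.le_def.2 (by
    have := hp b
    omega)))
  rw [M.symm.injective heq] at hlt
  exact lt_irrefl _ hlt

end ProposalAlgorithm

/-! ### Dismissals by a girl who refuses everybody -/

section Dismissals

/-- In the process in which `g` refuses everybody, boy `b` leaves `g` at time `t`: having made his
latest proposal to her, he is called on to propose again. -/
def IsDismissed (G f : Rankings n) (g : Fin n) (t : ℕ) (b : Fin n) : Prop :=
  proposer {g} G f t = some b ∧ (f b g : ℕ) + 1 = proposals {g} G f t b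

variable {G f : Rankings n} {g b b' : Fin n} {s t : ℕ}

lemma IsDismissed.time_unique (hs : IsDismissed G f g s b) (ht : IsDismissed G f g t b) : s = t :=
  eq_of_proposals_eq hs.1 ht.1 (hs.2.symm.trans ht.2)

lemma IsDismissed.boy_unique (hb : IsDismissed G f g t b) (hb' : IsDismissed G f g t b') :
    b = b' :=
  Option.some.inj (hb.1.symm.trans hb'.1)

lemma exists_isDismissed_of_lt_proposals (h : (f b g : ℕ) + 1 < proposals {g} G f t b) :
    ∃ s < t, IsDismissed G f g s b := by
  obtain ⟨s, hs, hprop, hlast⟩ := exists_proposer_of_lt_proposals h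
  exact ⟨s, hs, hprop, hlast.symm⟩

/-- The process runs forever, so some boy eventually proposes beyond his `M`-partner. The first one
to do so is not engaged, hence his `M`-partner must be `g`. -/
lemma exists_isDismissed_of_isStableMatching {M : Fin n ≃ Fin n}
    (hM : IsStableMatching (G, f) M) (g : Fin n) :
    ∃ t, IsDismissed G f g t (M g) ∧
      ∀ s ≤ t, ∀ b, proposals {g} G f s b ≤ f b (M.symm b) + 1 := by
  have hex : ∃ t, ∃ b, f b (M.symm b) + 1 < proposals {g} G f t b := by
    by_contra! hle
    have hsum := sum_le_sum fun b (_ : b ∈ univ) => hle (∑ b, (f b (M.symm b) + 1 : ℕ) + 1) b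
    rw [sum_proposals_eq (Set.singleton_nonempty g)] at hsum
    omega
  obtain ⟨t, ⟨q, hq⟩, hmin⟩ := Nat.findX hex
  obtain ⟨t, rfl⟩ := Nat.exists_eq_succ_of_ne_zero (n := t) (by rintro rfl; simp at hq)
  have hle (s : ℕ) (hs : s ≤ t) (b : Fin n) : proposals {g} G f s b ≤ f b (M.symm b) + 1 :=
    not_lt.1 fun hb => hmin s (Nat.lt_succ_of_le hs) ⟨b, hb⟩
  have hqt := hle t le_rfl q
  rw [Nat.succ_eq_add_one, proposals_succ] at hq
  split_ifs at hq with hprop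
  · have hlast : proposals {g} G f t q = f q (M.symm q) + 1 := by omega
    have hqg : M.symm q = g := by
      by_contra hne
      exact not_isEngaged_of_nextProposer hprop
        (isEngaged_of_isStableMatching hM (hle t le_rfl) hlast hne)
    obtain rfl : q = M g := (M.symm_apply_eq.1 hqg)
    exact ⟨t, ⟨hprop, by rw [hlast, M.symm_apply_apply]⟩, hle⟩
  · omega

lemma le_of_isDismissed_of_isStableMatching {M : Fin n ≃ Fin n} (hM : IsStableMatching (G, f) M)
    (ht : IsDismissed G f g t (M g))
    (hle : ∀ s ≤ t, ∀ b, proposals {g} G f s b ≤ f b (M.symm b) + 1) (hst : s ≤ t)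
    (hb : IsDismissed G f g s b) : G g (M g) ≤ G g b := by
  rcases hst.eq_or_lt with rfl | hlt
  · rw [hb.boy_unique ht]
  refine not_lt.1 fun hgb => ?_
  have hpref : (f b (M.symm b) : ℕ) ≤ f b g := isStableMatching_iff.1 hM g b hgb
  have hbound := hle (s + 1) hlt b
  rw [proposals_succ_of_proposer hb.1, ← hb.2] at hbound
  omega

lemma exists_isStableMatching_of_isDismissed (hb : IsDismissed G f g t b)
    (hall : ∀ h ≠ g, ∃ b', (f b' h : ℕ) < proposals {g} G f t b')
    (hbest : ∀ s < t, ∀ b', IsDismissed G f g s b' → G g b ≤ G g b') :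
    ∃ M, IsStableMatching (G, f) M ∧ M g = b := by
  obtain ⟨M, hM, hrank⟩ := exists_isStableMatching_of_suitors (G := G) (f := f)
      (p := proposals {g} G f t) fun h => by
    by_cases hg : h = g
    · subst hg
      refine ⟨b, hb.2, fun b' hb' => ?_⟩
      obtain ⟨s, hs, hdis⟩ := exists_isDismissed_of_lt_proposals hb'
      exact hbest s hs b' hdis
    · obtain ⟨b, hlast, hfav⟩ := exists_favourite_suitor (R := {g}) hg (hall h hg)
      exact ⟨b, hlast, fun b' hb' => hfav b' (by omega)⟩
  refine ⟨M, hM, (M.symm_apply_eq.1 ((f b).injective (Fin.ext ?_))).symm⟩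
  have := (hrank b).trans hb.2.symm
  omega

open Classical in
/-- The time at which `b` leaves the refusing girl `g`, or `⊤` if this never happens. -/
noncomputable def dismissalTime (G f : Rankings n) (g b : Fin n) : ℕ∞ :=
  if h : ∃ t, IsDismissed G f g t b then (h.choose : ℕ∞) else ⊤

/-- The enumeration of the boys by increasing dismissal time; boys who are never dismissed come
last. -/
noncomputable def dismissalOrder (G f : Rankings n) (g : Fin n) : Equiv.Perm (Fin n) :=
  Tuple.sort (dismissalTime G f g)

lemma dismissalTime_eq_coe_iff : dismissalTime G f g b = t ↔ IsDismissed G f g t b := by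
  unfold dismissalTime
  split_ifs with h
  · rw [Nat.cast_inj]
    exact ⟨fun ht => ht ▸ h.choose_spec, h.choose_spec.time_unique⟩
  · exact iff_of_false (ENat.natCast_ne_top t).symm fun ht => h ⟨t, ht⟩

variable {i j : Fin n}

lemma dismissalTime_dismissalOrder_le (hij : i ≤ j) :
    dismissalTime G f g (dismissalOrder G f g i) ≤ dismissalTime G f g (dismissalOrder G f g j) :=
  Tuple.monotone_sort (dismissalTime G f g) hij

lemma exists_isDismissed_of_le (hji : j ≤ i) (hi : IsDismissed G f g t (dismissalOrder G f g i)) :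
    ∃ s ≤ t, IsDismissed G f g s (dismissalOrder G f g j) := by
  have hle := dismissalTime_dismissalOrder_le (G := G) (f := f) (g := g) hji
  rw [dismissalTime_eq_coe_iff.2 hi] at hle
  obtain ⟨s, hs⟩ := ENat.ne_top_iff_exists.1 (ne_top_of_le_ne_top (ENat.natCast_ne_top t) hle)
  exact ⟨s, by exact_mod_cast hs ▸ hle, dismissalTime_eq_coe_iff.1 hs.symm⟩

lemma dismissalOrder_symm_le (hi : IsDismissed G f g t (dismissalOrder G f g i))
    (hb : IsDismissed G f g s b) (hst : s < t) : (dismissalOrder G f g).symm b ≤ i := by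
  by_contra! hlt
  have hle := dismissalTime_dismissalOrder_le (G := G) (f := f) (g := g) hlt.le
  rw [Equiv.apply_symm_apply, dismissalTime_eq_coe_iff.2 hi, dismissalTime_eq_coe_iff.2 hb,
    Nat.cast_le] at hle
  omega

/-- The positions in the list of `g` of the boys, enumerated in the order in which she dismisses
them. -/
noncomputable def dismissalRanks (G f : Rankings n) (g : Fin n) : Equiv.Perm (Fin n) :=
  G g * dismissalOrder G f g

lemma isRecord_of_isStableMatching {M : Fin n ≃ Fin n} (hM : IsStableMatching (G, f) M)
    (g : Fin n) :
    IsRecord (dismissalRanks G f g) ((dismissalOrder G f g).symm (M g)) := by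
  obtain ⟨t, ht, hle⟩ := exists_isDismissed_of_isStableMatching hM g
  intro j hj
  obtain ⟨s, hs, hdis⟩ := exists_isDismissed_of_le hj (by rwa [Equiv.apply_symm_apply])
  simpa [dismissalRanks] using le_of_isDismissed_of_isStableMatching hM ht hle hs hdis

lemma le_of_isDismissed_dismissalOrder {m : ℕ}
    (hi : IsDismissed G f g t (dismissalOrder G f g i))
    (hhits : {b | (f b g : ℕ) < proposals {g} G f m b}.ncard ≤ i) : m ≤ t := by
  by_contra! htm
  have hsub : dismissalOrder G f g '' Set.Iic i ⊆ {b | (f b g : ℕ) < proposals {g} G f m b} := by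
    rintro _ ⟨j, hj, rfl⟩
    obtain ⟨s, hs, -, hlast⟩ := exists_isDismissed_of_le hj hi
    have := proposals_mono (R := {g}) (G := G) (f := f) (dismissalOrder G f g j)
      (hs.trans htm.le)
    exact (Nat.lt_of_succ_le hlast.le).trans_le this
  have hcard := (Set.ncard_le_ncard hsub).trans hhits
  rw [Set.ncard_image_of_injective _ (Equiv.injective _), ← Finset.coe_Iic,
    Set.ncard_coe_finset, Fin.card_Iic] at hcard
  omega

lemma exists_isStableMatching_of_isRecord {m : ℕ} {M₀ : Fin n ≃ Fin n}
    (hall : ∀ h ≠ g, ∃ b, (f b h : ℕ) < proposals {g} G f m b)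
    (hhits : {b | (f b g : ℕ) < proposals {g} G f m b}.ncard ≤ i)
    (hM₀ : IsStableMatching (G, f) M₀) (hi : i ≤ (dismissalOrder G f g).symm (M₀ g))
    (hrec : IsRecord (dismissalRanks G f g) i) :
    ∃ M, IsStableMatching (G, f) M ∧ M g = dismissalOrder G f g i := by
  obtain ⟨t₀, ht₀, -⟩ := exists_isDismissed_of_isStableMatching hM₀ g
  obtain ⟨t, -, ht⟩ := exists_isDismissed_of_le hi (by rwa [Equiv.apply_symm_apply])
  refine exists_isStableMatching_of_isDismissed ht (fun h hg => ?_) fun s hs b hb => ?_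
  · exact (hall h hg).imp fun b hb =>
      hb.trans_le (proposals_mono b (le_of_isDismissed_dismissalOrder ht hhits))
  · simpa [dismissalRanks] using hrec _ (dismissalOrder_symm_le ht hb hs)

lemma stableHusbandCount_le_recordCount (G f : Rankings n) (g : Fin n) :
    stableHusbandCount n (G, f) g ≤ recordCount univ (dismissalRanks G f g) := by
  have hsub : {b | ∃ M, IsStableMatching (G, f) M ∧ M g = b} ⊆ dismissalOrder G f g ''
      ({i | IsRecord (dismissalRanks G f g) i} : Finset (Fin n)) := by
    rintro _ ⟨M, hM, rfl⟩
    exact ⟨_, by simpa using isRecord_of_isStableMatching hM g, Equiv.apply_symm_apply _ _⟩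
  calc stableHusbandCount n (G, f) g ≤ _ := Set.ncard_le_ncard hsub
    _ ≤ _ := Set.ncard_image_le (Set.toFinite _)
    _ = recordCount univ (dismissalRanks G f g) := Set.ncard_coe_finset _

lemma recordCount_window_le_stableHusbandCount {m D L K : ℕ}
    (hall : ∀ h ≠ g, ∃ b, (f b h : ℕ) < proposals {g} G f m b)
    (hhits : {b | (f b g : ℕ) < proposals {g} G f m b}.ncard ≤ D)
    (hbest : ∃ M, IsStableMatching (G, f) M ∧ (G g (M g) : ℕ) ≤ K)
    (hearly : ∀ j : Fin n, (j : ℕ) < L → K < (dismissalRanks G f g j : ℕ)) :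
    recordCount (window n D L) (dismissalRanks G f g) ≤ stableHusbandCount n (G, f) g := by
  obtain ⟨M₀, hM₀, hK⟩ := hbest
  have hL : L ≤ ((dismissalOrder G f g).symm (M₀ g) : ℕ) := not_lt.1 fun hlt => by
    have := hearly _ hlt
    rw [dismissalRanks, Equiv.Perm.mul_apply, Equiv.apply_symm_apply] at this
    omega
  have hsub : dismissalOrder G f g ''
      ({i ∈ window n D L | IsRecord (dismissalRanks G f g) i} : Finset (Fin n)) ⊆
        {b | ∃ M, IsStableMatching (G, f) M ∧ M g = b} := by
    rintro _ ⟨i, hi, rfl⟩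
    simp only [window, coe_filter, mem_filter, mem_univ, true_and, Set.mem_ofPred_eq] at hi
    exact exists_isStableMatching_of_isRecord hall (hhits.trans hi.1.1) hM₀
      (Fin.le_def.2 (hi.1.2.le.trans hL)) hi.2
  calc recordCount (window n D L) (dismissalRanks G f g) = _ := (Set.ncard_coe_finset _).symm
    _ = _ := (Set.ncard_image_of_injective _ (Equiv.injective (dismissalOrder G f g))).symm
    _ ≤ stableHusbandCount n (G, f) g := Set.ncard_le_ncard hsub

end Dismissals

section Congruence

variable {R : Set (Fin n)} {G G' f : Rankings n} {g : Fin n}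

lemma nextProposer_congr (h : ∀ x ∉ R, G x = G' x) : nextProposer R G f = nextProposer R G' f := by
  have hengaged : IsEngaged R G f = IsEngaged R G' f := by
    funext p b
    refine propext (exists_congr fun x => and_congr_right fun hx => ?_)
    rw [h x hx]
  unfold nextProposer
  rw [hengaged]

lemma proposals_congr (h : ∀ x ∉ R, G x = G' x) : proposals R G f = proposals R G' f := by
  funext t b
  induction t generalizing b with
  | zero => rfl
  | succ t ih =>
    rw [proposals_succ, proposals_succ, proposer, proposer, nextProposer_congr h, funext ih]

lemma dismissalOrder_congr (h : ∀ x ≠ g, G x = G' x) :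
    dismissalOrder G f g = dismissalOrder G' f g := by
  have hdis : IsDismissed G f g = IsDismissed G' f g := by
    unfold IsDismissed proposer
    rw [nextProposer_congr (R := {g}) h, proposals_congr (R := {g}) h]
  unfold dismissalOrder dismissalTime
  rw [hdis]

end Congruence

/-! ### Deferred decisions: the part of a list beyond the proposals made so far is exchangeable -/

section Locality

/-- The rankings `f` and `f'` agree on the first `p b` entries of the list of each `b`. -/
def AgreeBelow (p : Fin n → ℕ) (f f' : Rankings n) : Prop :=
  ∀ b x, (f b x : ℕ) < p b → f' b x = f b x

variable {R : Set (Fin n)} {G f f' : Rankings n} {p p' : Fin n → ℕ} {b q x y : Fin n} {t : ℕ}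

lemma AgreeBelow.symm (h : AgreeBelow p f f') : AgreeBelow p f' f := by
  intro b x hx
  have hpre := h b ((f b).symm (f' b x)) (by simpa using hx)
  rw [Equiv.apply_symm_apply] at hpre
  exact ((Equiv.symm_apply_eq _).1 ((f' b).injective hpre)).symm

lemma AgreeBelow.mono (h : AgreeBelow p f f') (hp : ∀ b, p' b ≤ p b) : AgreeBelow p' f f' :=
  fun b x hx => h b x (hx.trans_le (hp b))

lemma AgreeBelow.isEngaged (h : AgreeBelow p f f') (hb : IsEngaged R G f p b) :
    IsEngaged R G f' p b := by
  obtain ⟨x, hx, hlast, hbest⟩ := hb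
  refine ⟨x, hx, by rw [h b x (by omega), hlast], fun b' hb' => hbest b' ?_⟩
  rwa [h.symm b' x hb']

lemma AgreeBelow.nextProposer_eq (h : AgreeBelow p f f') :
    nextProposer R G f' p = nextProposer R G f p := by
  have hengaged : IsEngaged R G f' p = IsEngaged R G f p :=
    funext fun b => propext ⟨h.symm.isEngaged, h.isEngaged⟩
  unfold nextProposer
  rw [hengaged]

lemma AgreeBelow.proposals_eq (h : AgreeBelow (proposals R G f t) f f') :
    proposals R G f' t = proposals R G f t := by
  induction t with
  | zero => rfl
  | succ t ih =>
    have ht := h.mono fun b => proposals_mono b t.le_succ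
    funext b
    rw [proposals_succ, proposals_succ, proposer, proposer, ih ht, ht.nextProposer_eq]

lemma AgreeBelow.proposer_eq (h : AgreeBelow (proposals R G f t) f f') :
    proposer R G f' t = proposer R G f t := by
  rw [proposer, proposer, h.proposals_eq, h.nextProposer_eq]

/-- Exchange `x` and `y` in the list of `q`. -/
def swapRanks (f : Rankings n) (q x y : Fin n) : Rankings n :=
  Function.update f q (f q * Equiv.swap x y)

lemma swapRanks_swapRanks (f : Rankings n) (q x y : Fin n) :
    swapRanks (swapRanks f q x y) q x y = f := by
  simp [swapRanks, mul_assoc]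

lemma swapRanks_apply_right (f : Rankings n) (q x y : Fin n) : swapRanks f q x y q y = f q x := by
  simp [swapRanks]

lemma swapRanks_of_ne (f : Rankings n) (x y : Fin n) (hb : b ≠ q) : swapRanks f q x y b = f b :=
  Function.update_of_ne hb _ _

lemma agreeBelow_swapRanks (hx : p q ≤ f q x) (hy : p q ≤ f q y) :
    AgreeBelow p f (swapRanks f q x y) := by
  intro b z hz
  by_cases hb : b = q
  · subst hb
    have hzx : z ≠ x := by rintro rfl; omega
    have hzy : z ≠ y := by rintro rfl; omega
    simp [swapRanks, Equiv.swap_apply_of_ne_of_ne hzx hzy]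
  · rw [swapRanks_of_ne f x y hb]

/-- The girls to whom the time-`t` proposer has not proposed yet are exchangeable, because the
process up to time `t` has not looked at their order in his list. -/
lemma prob_le_of_swapRanks {E E' : Rankings n → Prop}
    (h : ∀ f, E f → ∃ q, proposer R G f t = some q ∧ proposals R G f t q ≤ f q x ∧
      proposals R G f t q ≤ f q y ∧ E' (swapRanks f q x y)) : prob E ≤ prob E' := by
  let exchange (f : Rankings n) : Rankings n := (proposer R G f t).elim f (swapRanks f · x y)
  have hexchange {f q} (hq : proposer R G f t = some q) : exchange f = swapRanks f q x y := by
    simp only [exchange, hq, Option.elim_some]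
  refine prob_le_of_leftInvOn exchange exchange (fun f hf => ?_) fun f hf => ?_
  · obtain ⟨q, hq, -, -, hE'⟩ := h f hf
    rwa [hexchange hq]
  · obtain ⟨q, hq, hx, hy, -⟩ := h f hf
    rw [hexchange hq, hexchange ((agreeBelow_swapRanks hx hy).proposer_eq.trans hq),
      swapRanks_swapRanks]

end Locality

section AllProposed

variable (R : Set (Fin n)) (G : Rankings n)

/-- The proposal made at time `t`, if any, goes to `h`. -/
def ProposesTo (t : ℕ) (h : Fin n) (f : Rankings n) : Prop :=
  ∃ q, proposer R G f t = some q ∧ (f q h : ℕ) = proposals R G f t q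

/-- Nobody has proposed to `h` before time `t`. -/
def Unproposed (t : ℕ) (h : Fin n) (f : Rankings n) : Prop := ∀ b, proposals R G f t b ≤ f b h

variable {R G} {f : Rankings n} {h : Fin n} {t : ℕ}

lemma Unproposed.exists_proposesTo (hU : Unproposed R G t h f) : ∃ x, ProposesTo R G t x f := by
  rcases hq : proposer R G f t with _ | q
  · obtain ⟨-, b, hb⟩ :=
      exists_last_suitor_of_forall_isEngaged (isEngaged_of_nextProposer_eq_none hq) h
    have := hU b
    omega
  · exact ⟨(f q).symm ⟨_, (hU q).trans_lt (f q h).isLt⟩, q, hq, by simp⟩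

lemma prob_unproposed_and_proposesTo_le (t : ℕ) (h x : Fin n) :
    prob (fun f => Unproposed R G t h f ∧ ProposesTo R G t x f) ≤
      prob (fun f => Unproposed R G t h f ∧ ProposesTo R G t h f) := by
  refine prob_le_of_swapRanks (R := R) (G := G) (t := t) (x := x) (y := h) ?_
  rintro f ⟨hU, q, hq, hx⟩
  have hagree := agreeBelow_swapRanks (p := proposals R G f t) hx.ge (hU q)
  refine ⟨q, hq, hx.ge, hU q, fun b => ?_, q, hagree.proposer_eq.trans hq, ?_⟩
  · rw [hagree.proposals_eq]
    by_cases hb : b = q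
    · rw [hb, swapRanks_apply_right, hx]
    · rw [swapRanks_of_ne f x h hb]
      exact hU b
  · rw [hagree.proposals_eq, swapRanks_apply_right, hx]

lemma prob_unproposed_le_mul (t : ℕ) (h : Fin n) : prob (Unproposed R G t h) ≤
    n * prob (fun f => Unproposed R G t h f ∧ ProposesTo R G t h f) := calc
  prob (Unproposed R G t h)
      ≤ prob (fun f => ∃ x ∈ univ, Unproposed R G t h f ∧ ProposesTo R G t x f) :=
    prob_mono fun f hU => hU.exists_proposesTo.imp fun x hx => ⟨mem_univ x, hU, hx⟩
  _ ≤ ∑ x, prob (fun f => Unproposed R G t h f ∧ ProposesTo R G t x f) := prob_exists_le _ _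
  _ ≤ ∑ _x : Fin n, prob (fun f => Unproposed R G t h f ∧ ProposesTo R G t h f) :=
    sum_le_sum fun x _ => prob_unproposed_and_proposesTo_le t h x
  _ = n * prob (fun f => Unproposed R G t h f ∧ ProposesTo R G t h f) := by simp

lemma prob_unproposed_succ_le (t : ℕ) (h : Fin n) :
    prob (Unproposed R G (t + 1) h) ≤ (1 - 1 / (n : ℝ)) * prob (Unproposed R G t h) := by
  have hn : (0 : ℝ) < n := by exact_mod_cast h.pos
  have hdisj : prob (Unproposed R G (t + 1) h) +
      prob (fun f => Unproposed R G t h f ∧ ProposesTo R G t h f) ≤ prob (Unproposed R G t h) := by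
    refine prob_add_prob_le_of_disjoint
      (fun f hU b => (proposals_mono b t.le_succ).trans (hU b)) (fun f hU => hU.1) ?_
    rintro f hU ⟨-, q, hq, hh⟩
    have := hU q
    rw [proposals_succ_of_proposer hq] at this
    omega
  have hmul := (div_le_iff₀' hn).2 (prob_unproposed_le_mul (R := R) (G := G) t h)
  rw [sub_mul, one_mul, one_div_mul_eq_div]
  linarith

lemma prob_unproposed_le (t : ℕ) (h : Fin n) :
    prob (Unproposed R G t h) ≤ (1 - 1 / (n : ℝ)) ^ t := by
  have hn : (1 : ℝ) ≤ n := by exact_mod_cast h.pos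
  have hnonneg : 0 ≤ 1 - 1 / (n : ℝ) := sub_nonneg.2 (div_le_one_of_le₀ hn (by positivity))
  induction t with
  | zero => simpa using prob_le_one _
  | succ t ih =>
    rw [pow_succ']
    exact (prob_unproposed_succ_le t h).trans (by gcongr)

lemma prob_not_all_proposed_le (R : Set (Fin n)) (G : Rankings n) (k : ℕ) :
    prob (fun f => ¬ ∀ h, ∃ b, (f b h : ℕ) < proposals R G f (n * k) b) ≤
      n * Real.exp (-(k : ℝ)) := by
  have hpow (h : Fin n) : (1 - 1 / (n : ℝ)) ^ (n * k) ≤ Real.exp (-(k : ℝ)) := by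
    have hn : (1 : ℝ) ≤ n := by exact_mod_cast h.pos
    have hnonneg : 0 ≤ 1 - 1 / (n : ℝ) := sub_nonneg.2 (div_le_one_of_le₀ hn (by positivity))
    calc (1 - 1 / (n : ℝ)) ^ (n * k) ≤ Real.exp (-(1 / (n : ℝ))) ^ (n * k) := by
          gcongr
          exact Real.one_sub_le_exp_neg _
      _ = Real.exp (-(k : ℝ)) := by
          rw [← Real.exp_nat_mul]
          congr 1
          push_cast
          field_simp
  calc prob (fun f => ¬ ∀ h, ∃ b, (f b h : ℕ) < proposals R G f (n * k) b)
      = prob (fun f => ∃ h ∈ univ, Unproposed R G (n * k) h f) :=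
        prob_congr fun f => by simp [Unproposed]
    _ ≤ ∑ h, prob (Unproposed R G (n * k) h) := prob_exists_le _ _
    _ ≤ ∑ _h : Fin n, Real.exp (-(k : ℝ)) :=
        sum_le_sum fun h _ => (prob_unproposed_le _ h).trans (hpow h)
    _ = n * Real.exp (-(k : ℝ)) := by simp

end AllProposed

section Hits

variable (R : Set (Fin n)) (G : Rankings n)

/-- The proposal made at time `t` goes to `g` and is among the first `s` of its proposer. -/
def ProposesEarlyTo (s t : ℕ) (g : Fin n) (f : Rankings n) : Prop :=
  ∃ q, proposer R G f t = some q ∧ (f q g : ℕ) = proposals R G f t q ∧ (f q g : ℕ) < s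

variable {R G}

lemma le_card_filter_le_perm (σ : Equiv.Perm (Fin n)) (s : ℕ) : n ≤ s + #{y | s ≤ (σ y : ℕ)} := by
  have hlt : #{y | ¬ s ≤ (σ y : ℕ)} ≤ #(range s) :=
    card_le_card_of_injOn (fun y => (σ y : ℕ)) (fun y hy => by simpa using hy)
      (Fin.val_injective.comp σ.injective).injOn
  have hsum := card_filter_add_card_filter_not (s := univ) fun y => s ≤ (σ y : ℕ)
  rw [card_fin] at hsum
  rw [card_range] at hlt
  omega

lemma prob_proposesEarlyTo_mul_le_one (s t : ℕ) (g : Fin n) :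
    prob (ProposesEarlyTo R G s t g) * (n - s) ≤ 1 := by
  classical
  let late (y : Fin n) (f : Rankings n) : Prop :=
    ∃ q, proposer R G f t = some q ∧ ((f q g : ℕ) = proposals R G f t q ∧ (f q g : ℕ) < s) ∧
      s ≤ f q y
  calc prob (ProposesEarlyTo R G s t g) * (n - s) ≤ 𝔼 f, (#{y | late y f} : ℝ) := by
        rw [prob_eq_expect, expect_mul]
        refine expect_le_expect fun f _ => ?_
        split_ifs with hf
        · obtain ⟨q, hq, hg⟩ := hf
          have hcard : (n : ℝ) ≤ s + #{y | s ≤ (f q y : ℕ)} :=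
            mod_cast le_card_filter_le_perm (f q) s
          have hmono : #{y | s ≤ (f q y : ℕ)} ≤ #{y | late y f} :=
            card_le_card (monotone_filter_right _ fun y _ hy => ⟨q, hq, hg, hy⟩)
          rw [one_mul, sub_le_iff_le_add']
          exact hcard.trans (by gcongr)
        · rw [zero_mul]
          positivity
    _ = ∑ y, prob (late y) := expect_card_filter univ late
    _ ≤ ∑ y, prob (ProposesTo R G t y) := by
        refine sum_le_sum fun y _ => prob_le_of_swapRanks (R := R) (G := G) (t := t) (x := g)
          (y := y) ?_
        rintro f ⟨q, hq, ⟨hg, hs⟩, hy⟩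
        have hqy : proposals R G f t q ≤ f q y := by omega
        have hagree := agreeBelow_swapRanks (p := proposals R G f t) hg.ge hqy
        exact ⟨q, hq, hg.ge, hqy, q, hagree.proposer_eq.trans hq, by
          rw [hagree.proposals_eq, swapRanks_apply_right, hg]⟩
    _ ≤ 1 := sum_prob_le_one_of_unique _ _ fun f x _ y _ ⟨q, hq, hx⟩ ⟨q', hq', hy⟩ => by
        obtain rfl : q = q' := Option.some.inj (hq.symm.trans hq')
        exact (f q).injective (Fin.ext (hx.trans hy.symm))

lemma card_lt_proposals_mul_le (f : Rankings n) (s m : ℕ) :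
    #{b | s < proposals R G f m b} * (s + 1) ≤ m := calc
  #{b | s < proposals R G f m b} * (s + 1)
      ≤ ∑ b with s < proposals R G f m b, proposals R G f m b :=
    card_nsmul_le_sum _ (proposals R G f m) (s + 1) fun _ hb => (mem_filter.1 hb).2
  _ ≤ ∑ b, proposals R G f m b := sum_le_univ_sum_of_nonneg fun _ => Nat.zero_le _
  _ ≤ m := sum_proposals_le m

open Classical in
lemma ncard_hits_le (f : Rankings n) (g : Fin n) (s m : ℕ) :
    {b | (f b g : ℕ) < proposals R G f m b}.ncard ≤
      #{t ∈ range m | ProposesEarlyTo R G s t g f} + #{b | s < proposals R G f m b} := by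
  let early : Finset (Fin n) := {b | (f b g : ℕ) < proposals R G f m b ∧ proposals R G f m b ≤ s}
  have hearly : early.map .some ⊆
      {t ∈ range m | ProposesEarlyTo R G s t g f}.image (proposer R G f) := by
    intro o ho
    obtain ⟨b, hb, rfl⟩ := mem_map.1 ho
    obtain ⟨-, hhit, hs⟩ := mem_filter.1 hb
    obtain ⟨t, ht, hq, hg⟩ := exists_proposer_of_lt_proposals hhit
    exact mem_image.2 ⟨t, mem_filter.2 ⟨mem_range.2 ht, b, hq, hg.symm, by omega⟩, hq⟩
  have hcard : #early ≤ #{t ∈ range m | ProposesEarlyTo R G s t g f} := by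
    simpa only [card_map] using (card_le_card hearly).trans card_image_le
  have hsub : {b | (f b g : ℕ) < proposals R G f m b} ⊆
      ↑(early ∪ ({b | s < proposals R G f m b} : Finset (Fin n))) := by
    intro b hb
    simp only [early, coe_union, coe_filter, mem_univ, true_and, Set.mem_union,
      Set.mem_ofPred_eq] at hb ⊢
    omega
  calc {b | (f b g : ℕ) < proposals R G f m b}.ncard ≤ _ := Set.ncard_le_ncard hsub
    _ ≤ #early + #{b | s < proposals R G f m b} := by
        rw [Set.ncard_coe_finset]
        exact card_union_le _ _
    _ ≤ _ := by gcongr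

lemma prob_lt_ncard_hits_le (R : Set (Fin n)) (G : Rankings n) (g : Fin n) {k : ℕ} (hk : 0 < k) :
    prob (fun f => k ^ 2 + 2 * k < {b | (f b g : ℕ) < proposals R G f (n * k) b}.ncard) ≤
      2 / k := by
  classical
  have hn : (0 : ℝ) < n := by exact_mod_cast g.pos
  have hlate (f : Rankings n) : #{b | n / 2 < proposals R G f (n * k) b} ≤ 2 * k := by
    have hmul := card_lt_proposals_mul_le (R := R) (G := G) f (n / 2) (n * k)
    by_contra! hlt
    have := (Nat.mul_le_mul_right (n / 2 + 1) hlt.le).trans hmul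
    nlinarith [Nat.lt_mul_div_succ n two_pos]
  have hearly (t : ℕ) : prob (ProposesEarlyTo R G (n / 2) t g) ≤ 2 / n := by
    have hhalf : (n : ℝ) / 2 ≤ n - (n / 2 : ℕ) := by
      have : ((n / 2 : ℕ) : ℝ) ≤ n / 2 := Nat.cast_div_le
      linarith
    rw [← inv_div, ← one_div, le_div_iff₀ (by positivity)]
    exact (mul_le_mul_of_nonneg_left hhalf (prob_nonneg _)).trans
      (prob_proposesEarlyTo_mul_le_one _ t g)
  calc prob (fun f => k ^ 2 + 2 * k < {b | (f b g : ℕ) < proposals R G f (n * k) b}.ncard)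
      ≤ prob (fun f => (k : ℝ) ^ 2 ≤
          (#{t ∈ range (n * k) | ProposesEarlyTo R G (n / 2) t g f} : ℝ)) := by
        refine prob_mono fun f hf => ?_
        have := ncard_hits_le (R := R) (G := G) f g (n / 2) (n * k)
        exact_mod_cast (by have := hlate f; omega :
          k ^ 2 ≤ #{t ∈ range (n * k) | ProposesEarlyTo R G (n / 2) t g f})
    _ ≤ (∑ t ∈ range (n * k), prob (ProposesEarlyTo R G (n / 2) t g)) / k ^ 2 := by
        rw [← expect_card_filter]
        exact prob_le_expect_div (fun f => by positivity) (by positivity)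
    _ ≤ (∑ _t ∈ range (n * k), 2 / (n : ℝ)) / k ^ 2 := by
        gcongr with t
        exact hearly t
    _ = 2 / k := by
        rw [sum_const, card_range, nsmul_eq_mul]
        push_cast
        field_simp

end Hits

/-! ### Random profiles -/

section RandomProfile

lemma prob_le_of_forall_prob_boys_le {p : PrefProfile n → Prop} {ε : ℝ}
    (h : ∀ G, prob (fun f => p (G, f)) ≤ ε) : prob p ≤ ε :=
  prob_le_of_forall_prob_update_le (fun P f => (P.1, f)) Prod.snd (fun _ _ => rfl)
    (fun _ _ => rfl) fun P => h P.1

lemma prob_le_of_forall_prob_girls_le {p : PrefProfile n → Prop} {ε : ℝ}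
    (h : ∀ f, prob (fun G => p (G, f)) ≤ ε) : prob p ≤ ε :=
  prob_le_of_forall_prob_update_le (fun P G => (G, P.2)) Prod.fst (fun _ _ => rfl)
    (fun _ _ => rfl) fun P => h P.2

/-- The order in which `g` dismisses the boys does not depend on her own list. -/
lemma prob_dismissalRanks (g : Fin n) (E : Equiv.Perm (Fin n) → Prop) :
    prob (fun P : PrefProfile n => E (dismissalRanks P.1 P.2 g)) = prob E := by
  have horder (P : PrefProfile n) (σ : Equiv.Perm (Fin n)) :
      dismissalRanks (Function.update P.1 g σ) P.2 g = σ * dismissalOrder P.1 P.2 g := by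
    rw [dismissalRanks, Function.update_self,
      dismissalOrder_congr fun x hx => Function.update_of_ne hx σ P.1]
  have hresample (P : PrefProfile n) :
      prob (fun σ => E (dismissalRanks (Function.update P.1 g σ) P.2 g)) = prob E := by
    simp only [horder]
    exact prob_comp_equiv (Equiv.mulRight _) E
  rw [prob_eq_expect_prob_update (fun P σ => (Function.update P.1 g σ, P.2)) (fun P => P.1 g)
    (by simp) (by simp)]
  simp only [hresample, Fintype.expect_const]

lemma prob_perm_apply_eq_le (j v : Fin n) :
    prob (fun τ : Equiv.Perm (Fin n) => τ j = v) ≤ 1 / n := by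
  have hn : (0 : ℝ) < n := by exact_mod_cast j.pos
  have hsymm (w : Fin n) : prob (fun τ : Equiv.Perm (Fin n) => τ j = w) =
      prob (fun τ : Equiv.Perm (Fin n) => τ j = v) := by
    rw [← prob_comp_equiv (Equiv.mulLeft (Equiv.swap w v))]
    exact prob_congr fun τ => by simp [Equiv.swap_apply_eq_iff]
  have hsum : ∑ w : Fin n, prob (fun τ : Equiv.Perm (Fin n) => τ j = w) ≤ 1 :=
    sum_prob_le_one_of_unique _ _ fun τ w _ w' _ hw hw' => hw.symm.trans hw'
  simp only [hsymm, sum_const, card_fin, nsmul_eq_mul] at hsum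
  rwa [le_div_iff₀' hn]

lemma prob_exists_lt_apply_le_le (n L K : ℕ) :
    prob (fun τ : Equiv.Perm (Fin n) => ∃ j : Fin n, (j : ℕ) < L ∧ (τ j : ℕ) ≤ K) ≤
      L * (K + 1) / n := by
  let below (m : ℕ) : Finset (Fin n) := {j | (j : ℕ) < m}
  have hbelow (m : ℕ) : #(below m) ≤ m := by
    simpa using card_le_card_of_injOn (t := range m) Fin.val (fun j hj => by simpa [below] using hj)
      Fin.val_injective.injOn
  calc prob (fun τ : Equiv.Perm (Fin n) => ∃ j : Fin n, (j : ℕ) < L ∧ (τ j : ℕ) ≤ K)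
      ≤ prob (fun τ : Equiv.Perm (Fin n) => ∃ x ∈ below L ×ˢ below (K + 1), τ x.1 = x.2) := by
        refine prob_mono fun τ ⟨j, hj, hK⟩ => ⟨(j, τ j), ?_, rfl⟩
        simpa [below] using ⟨hj, hK⟩
    _ ≤ ∑ x ∈ below L ×ˢ below (K + 1), prob (fun τ : Equiv.Perm (Fin n) => τ x.1 = x.2) :=
        prob_exists_le _ _
    _ ≤ ∑ _x ∈ below L ×ˢ below (K + 1), 1 / (n : ℝ) :=
        sum_le_sum fun x _ => prob_perm_apply_eq_le x.1 x.2
    _ = (#(below L) * #(below (K + 1)) : ℕ) / (n : ℝ) := by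
        rw [sum_const, card_product, nsmul_eq_mul, mul_one_div]
    _ ≤ L * (K + 1) / n := by
        gcongr
        exact_mod_cast Nat.mul_le_mul (hbelow L) (hbelow (K + 1))

end RandomProfile

section GoodHusband

/-- Some stable husband of `g` is among her `K + 1` favourite boys. -/
def HasGoodHusband (K : ℕ) (g : Fin n) (P : PrefProfile n) : Prop :=
  ∃ M, IsStableMatching P M ∧ (P.1 g (M g) : ℕ) ≤ K

/-- Some stable matching gives the girls husbands of total rank at most `m`. -/
def HasGoodMatching (m : ℕ) (P : PrefProfile n) : Prop :=
  ∃ M, IsStableMatching P M ∧ ∑ g, (P.1 g (M g) : ℕ) ≤ m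

lemma prob_not_hasGoodMatching_le (n k : ℕ) :
    prob (fun P : PrefProfile n => ¬ HasGoodMatching (n * k) P) ≤ n * Real.exp (-(k : ℝ)) := by
  refine prob_le_of_forall_prob_girls_le fun f =>
    (prob_mono fun G hG hall => hG ?_).trans (prob_not_all_proposed_le ∅ f k)
  obtain ⟨M, hM, hrank⟩ := exists_isStableMatching_of_all_proposed hall
  exact ⟨M.symm, isStableMatching_swap hM, hrank⟩

open Classical in
lemma HasGoodMatching.card_not_hasGoodHusband_le {m K : ℕ} {P : PrefProfile n}
    (h : HasGoodMatching m P) : #{g | ¬ HasGoodHusband K g P} * (K + 1) ≤ m := by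
  obtain ⟨M, hM, hrank⟩ := h
  calc #{g | ¬ HasGoodHusband K g P} * (K + 1)
      ≤ ∑ g with ¬ HasGoodHusband K g P, (P.1 g (M g) : ℕ) :=
        card_nsmul_le_sum _ (fun g => (P.1 g (M g) : ℕ)) (K + 1) fun g hg =>
          not_le.1 fun hle => (mem_filter.1 hg).2 ⟨M, hM, hle⟩
    _ ≤ ∑ g, (P.1 g (M g) : ℕ) := sum_le_univ_sum_of_nonneg fun _ => Nat.zero_le _
    _ ≤ m := hrank

/-- Rename the girls, the new name of `e g` being `g`. -/
def relabelGirls (e : Equiv.Perm (Fin n)) : PrefProfile n ≃ PrefProfile n :=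
  (Equiv.arrowCongr e.symm (Equiv.refl _)).prodCongr
    (Equiv.piCongrRight fun _ => Equiv.mulRight e)

lemma HasGoodHusband.relabelGirls {e : Equiv.Perm (Fin n)} {K : ℕ} {g : Fin n}
    {P : PrefProfile n} (h : HasGoodHusband K (e g) P) :
    HasGoodHusband K g (relabelGirls e P) := by
  obtain ⟨M, hM, hrank⟩ := h
  refine ⟨e.trans M, ?_, hrank⟩
  rw [isStableMatching_iff] at hM ⊢
  intro x b hb
  simpa [StableMarriage.relabelGirls] using hM (e x) b hb

lemma prob_not_hasGoodHusband_le_prob (K : ℕ) (g g' : Fin n) :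
    prob (fun P => ¬ HasGoodHusband K g P) ≤ prob (fun P => ¬ HasGoodHusband K g' P) := by
  rw [← prob_comp_equiv (relabelGirls (Equiv.swap g g')) fun P => ¬ HasGoodHusband K g P]
  refine prob_mono fun P hP hgood => hP (HasGoodHusband.relabelGirls ?_)
  rwa [Equiv.swap_apply_left]

open Classical in
lemma card_hasGoodMatching_and_not_hasGoodHusband_le {k : ℕ} (hk : 0 < k) (P : PrefProfile n) :
    (#{g | HasGoodMatching (n * k) P ∧ ¬ HasGoodHusband (k ^ 2) g P} : ℝ) ≤ n / k := by
  by_cases hP : HasGoodMatching (n * k) P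
  · have hcard : #{g | ¬ HasGoodHusband (k ^ 2) g P} * k ≤ n := by
      have := hP.card_not_hasGoodHusband_le (K := k ^ 2)
      refine Nat.le_of_mul_le_mul_right ?_ hk
      nlinarith
    simp only [hP, true_and]
    rw [le_div_iff₀ (by positivity)]
    exact_mod_cast hcard
  · simp only [hP, false_and, filter_false, card_empty, Nat.cast_zero]
    positivity

lemma prob_not_hasGoodHusband_le (g : Fin n) {k : ℕ} (hk : 0 < k) :
    prob (fun P => ¬ HasGoodHusband (k ^ 2) g P) ≤ 1 / k + n * Real.exp (-(k : ℝ)) := by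
  classical
  have hn : (0 : ℝ) < n := by exact_mod_cast g.pos
  have hmul : n * prob (fun P => ¬ HasGoodHusband (k ^ 2) g P) ≤
      n * (1 / k + n * Real.exp (-(k : ℝ))) := calc
    n * prob (fun P => ¬ HasGoodHusband (k ^ 2) g P)
      = ∑ _g' : Fin n, prob (fun P => ¬ HasGoodHusband (k ^ 2) g P) := by simp
    _ ≤ ∑ g' : Fin n, (prob (fun P : PrefProfile n => ¬ HasGoodMatching (n * k) P) +
          prob (fun P => HasGoodMatching (n * k) P ∧ ¬ HasGoodHusband (k ^ 2) g' P)) :=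
        sum_le_sum fun g' _ => (prob_not_hasGoodHusband_le_prob _ g g').trans <|
          (prob_mono fun P hP => by tauto).trans (prob_or_le _ _)
    _ = n * prob (fun P : PrefProfile n => ¬ HasGoodMatching (n * k) P) +
          𝔼 P : PrefProfile n,
            (#{g' | HasGoodMatching (n * k) P ∧ ¬ HasGoodHusband (k ^ 2) g' P} : ℝ) := by
        rw [sum_add_distrib, expect_card_filter]
        simp
    _ ≤ n * (n * Real.exp (-(k : ℝ))) + n / k := by
        gcongr
        · exact prob_not_hasGoodMatching_le n k
        · exact expect_le univ_nonempty fun P _ =>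
            card_hasGoodMatching_and_not_hasGoodHusband_le hk P
    _ = n * (1 / k + n * Real.exp (-(k : ℝ))) := by ring
  exact le_of_mul_le_mul_left hmul hn

end GoodHusband

section Tails

lemma prob_stableHusbandCount_lt_recordCount_window_le (g : Fin n) {k : ℕ} (hk : 0 < k) (L : ℕ) :
    prob (fun P : PrefProfile n => stableHusbandCount n P g <
        recordCount (window n (k ^ 2 + 2 * k) L) (dismissalRanks P.1 P.2 g)) ≤
      3 / k + 2 * (n * Real.exp (-(k : ℝ))) + L * (k ^ 2 + 1) / n := by
  let missed (P : PrefProfile n) : Prop :=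
    ¬ ∀ h, ∃ b, (P.2 b h : ℕ) < proposals {g} P.1 P.2 (n * k) b
  let manyHits (P : PrefProfile n) : Prop :=
    k ^ 2 + 2 * k < {b | (P.2 b g : ℕ) < proposals {g} P.1 P.2 (n * k) b}.ncard
  let noGood (P : PrefProfile n) : Prop := ¬ HasGoodHusband (k ^ 2) g P
  let earlyGood (P : PrefProfile n) : Prop :=
    ∃ j : Fin n, (j : ℕ) < L ∧ (dismissalRanks P.1 P.2 g j : ℕ) ≤ k ^ 2
  have hmissed : prob missed ≤ n * Real.exp (-(k : ℝ)) :=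
    prob_le_of_forall_prob_boys_le fun G => prob_not_all_proposed_le {g} G k
  have hmanyHits : prob manyHits ≤ 2 / k :=
    prob_le_of_forall_prob_boys_le fun G => prob_lt_ncard_hits_le {g} G g hk
  have hnoGood : prob noGood ≤ 1 / k + n * Real.exp (-(k : ℝ)) := prob_not_hasGoodHusband_le g hk
  have hearlyGood : prob earlyGood ≤ L * (k ^ 2 + 1) / n :=
    (prob_dismissalRanks g fun τ => ∃ j : Fin n, (j : ℕ) < L ∧ (τ j : ℕ) ≤ k ^ 2).trans_le
      (mod_cast prob_exists_lt_apply_le_le n L (k ^ 2))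
  calc prob (fun P : PrefProfile n => stableHusbandCount n P g <
        recordCount (window n (k ^ 2 + 2 * k) L) (dismissalRanks P.1 P.2 g))
      ≤ prob (fun P => (missed P ∨ manyHits P) ∨ noGood P ∨ earlyGood P) := by
        refine prob_mono fun P hlt => ?_
        by_contra! hgood
        obtain ⟨⟨hall, hhits⟩, hbest, hearly⟩ := hgood
        simp only [manyHits, noGood, earlyGood, not_exists, not_and, not_not, not_lt,
          not_le] at hall hhits hbest hearly
        exact hlt.not_ge (recordCount_window_le_stableHusbandCount (fun h _ => hall h) hhits hbest
          hearly)
    _ ≤ (prob missed + prob manyHits) + (prob noGood + prob earlyGood) :=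
        (prob_or_le _ _).trans (add_le_add (prob_or_le _ _) (prob_or_le _ _))
    _ ≤ 3 / k + 2 * (n * Real.exp (-(k : ℝ))) + L * (k ^ 2 + 1) / n := by
        rw [show (3 : ℝ) / k = 2 / k + 1 / k by ring]
        linarith

/-- The number of rounds of `n` proposals each (twice the logarithm of `n`, rounded up) after which
every girl has been proposed to, except with probability at most `1 / log n`. -/
noncomputable def proposalCutoff (n : ℕ) : ℕ := ⌈2 * Real.log n⌉₊

/-- The positions in the dismissal order of a girl whose records are stable husbands with high
probability. Its lower end bounds the number of proposals she gets within the first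
`n * proposalCutoff n` ones; before its upper end she dismisses nobody from the top
`proposalCutoff n ^ 2 + 1` places of her list. -/
noncomputable def centralWindow (n : ℕ) : Finset (Fin n) :=
  window n (proposalCutoff n ^ 2 + 2 * proposalCutoff n) (n / proposalCutoff n ^ 3)

lemma two_mul_log_le_proposalCutoff (n : ℕ) : 2 * Real.log n ≤ proposalCutoff n := Nat.le_ceil _

lemma proposalCutoff_le (hn : 1 ≤ Real.log n) : (proposalCutoff n : ℝ) ≤ 3 * Real.log n := by
  have := Nat.ceil_lt_add_one (a := 2 * Real.log n) (by linarith)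
  rw [proposalCutoff]
  linarith

lemma one_le_proposalCutoff (hn : 1 ≤ Real.log n) : 1 ≤ proposalCutoff n :=
  Nat.one_le_cast.1 (by linarith [two_mul_log_le_proposalCutoff n] : (1 : ℝ) ≤ proposalCutoff n)

lemma natCast_pos_of_one_le_log (hn : 1 ≤ Real.log n) : (0 : ℝ) < n := by
  rcases n.eq_zero_or_pos with rfl | hpos
  · norm_num at hn
  · exact_mod_cast hpos

lemma mul_exp_neg_proposalCutoff_le (hn : 1 ≤ Real.log n) :
    n * Real.exp (-(proposalCutoff n : ℝ)) ≤ 1 / Real.log n := by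
  set l := Real.log n
  calc n * Real.exp (-(proposalCutoff n : ℝ)) = Real.exp (l + -(proposalCutoff n : ℝ)) := by
        rw [Real.exp_add, Real.exp_log (natCast_pos_of_one_le_log hn)]
    _ ≤ Real.exp (-l) := by
        gcongr
        linarith [two_mul_log_le_proposalCutoff n]
    _ ≤ 1 / l := by
        rw [Real.exp_neg, ← one_div]
        gcongr
        linarith [Real.add_one_le_exp l]

lemma prob_stableHusbandCount_lt_recordCount_centralWindow_le (g : Fin n)
    (hn : 1 ≤ Real.log n) :
    prob (fun P : PrefProfile n =>
        stableHusbandCount n P g < recordCount (centralWindow n) (dismissalRanks P.1 P.2 g)) ≤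
      5 / Real.log n := by
  set l := Real.log n
  set k := proposalCutoff n
  set L := n / k ^ 3
  have hn0 : (0 : ℝ) < n := natCast_pos_of_one_le_log hn
  have hk1 : (1 : ℝ) ≤ k := mod_cast one_le_proposalCutoff hn
  have hinv : 1 / (k : ℝ) ≤ 1 / l / 2 := by
    rw [div_div, mul_comm]
    exact one_div_le_one_div_of_le (by positivity) (two_mul_log_le_proposalCutoff n)
  have hearly : L * ((k : ℝ) ^ 2 + 1) / n ≤ 2 * (1 / k) := by
    have hLk : (L : ℝ) * k ^ 3 ≤ n := mod_cast Nat.div_mul_le_self n (k ^ 3)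
    have hk3 : (k : ℝ) ≤ k ^ 3 := le_self_pow₀ hk1 (by norm_num)
    rw [mul_one_div, div_le_div_iff₀ hn0 (by positivity)]
    nlinarith [mul_le_mul_of_nonneg_left hk3 (Nat.cast_nonneg (α := ℝ) L)]
  calc _ ≤ 3 / (k : ℝ) + 2 * (n * Real.exp (-(k : ℝ))) + L * ((k : ℝ) ^ 2 + 1) / n :=
        prob_stableHusbandCount_lt_recordCount_window_le g (one_le_proposalCutoff hn) L
    _ ≤ 3 * (1 / l / 2) + 2 * (1 / l) + 2 * (1 / l / 2) := by
        rw [div_eq_mul_one_div 3]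
        gcongr
        · exact mul_exp_neg_proposalCutoff_le hn
        · exact hearly.trans (by gcongr)
    _ ≤ 5 / l := by
        rw [div_eq_mul_one_div 5]
        nlinarith [one_div_pos.2 (zero_lt_one.trans_le hn)]

lemma log_sub_log_le_recordMean_centralWindow (hn : 1 ≤ Real.log n) :
    Real.log n - Real.log (972 * Real.log n ^ 5) ≤ recordMean (centralWindow n) := by
  refine le_trans ?_ (log_sub_log_le_recordMean_window _ (Nat.div_le_self _ _))
  set l := Real.log n with hl
  set k := proposalCutoff n
  have hn0 : (0 : ℝ) < n := natCast_pos_of_one_le_log hn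
  have hk1 : (1 : ℝ) ≤ k := mod_cast one_le_proposalCutoff hn
  have hL : (n : ℝ) ≤ ((n / k ^ 3 : ℕ) + 1) * k ^ 3 := by
    have hpos : 0 < k ^ 3 := pow_pos (one_le_proposalCutoff hn) 3
    have := Nat.lt_div_mul_add (a := n) hpos
    exact_mod_cast (by linarith : n ≤ (n / k ^ 3 + 1) * k ^ 3)
  have hD : (((k ^ 2 + 2 * k : ℕ) : ℝ) + 1) * k ^ 3 ≤ 972 * l ^ 5 := calc
    (((k ^ 2 + 2 * k : ℕ) : ℝ) + 1) * k ^ 3 = ((k : ℝ) + 1) ^ 2 * k ^ 3 := by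
        push_cast
        ring
    _ ≤ ((k : ℝ) + k) ^ 2 * k ^ 3 := by gcongr
    _ = 4 * (k : ℝ) ^ 5 := by ring
    _ ≤ 4 * (3 * l) ^ 5 := by
        gcongr
        exact proposalCutoff_le hn
    _ = 972 * l ^ 5 := by ring
  rw [hl, ← Real.log_div (by positivity) (by positivity),
    ← Real.log_div (by positivity) (by positivity)]
  refine Real.log_le_log (by positivity) ?_
  rw [div_le_div_iff₀ (by positivity) (by positivity)]
  calc n * (((k ^ 2 + 2 * k : ℕ) : ℝ) + 1)
      ≤ ((n / k ^ 3 : ℕ) + 1) * k ^ 3 * (((k ^ 2 + 2 * k : ℕ) : ℝ) + 1) := by gcongr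
    _ = ((n / k ^ 3 : ℕ) + 1) * ((((k ^ 2 + 2 * k : ℕ) : ℝ) + 1) * k ^ 3) := by ring
    _ ≤ ((n / k ^ 3 : ℕ) + 1) * (972 * l ^ 5) := by gcongr

lemma prob_abs_recordCount_sub_le_div_log (S : Finset (Fin n)) {r : ℝ} (hr : 0 < r)
    (hn : 1 ≤ Real.log n) :
    prob (fun τ => r * Real.log n ≤ |(recordCount S τ : ℝ) - recordMean S|) ≤
      2 / r ^ 2 / Real.log n := calc
  prob (fun τ => r * Real.log n ≤ |(recordCount S τ : ℝ) - recordMean S|)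
      ≤ recordMean S / (r * Real.log n) ^ 2 := prob_le_abs_recordCount_sub_le S (by positivity)
  _ ≤ 2 * Real.log n / (r * Real.log n) ^ 2 := by
      gcongr
      linarith [recordMean_le S]
  _ = 2 / r ^ 2 / Real.log n := by field_simp

lemma prob_stableHusbandCount_lt_le {c : ℝ} (hc : c < 1) (g : Fin n) (hn : 1 ≤ Real.log n)
    (hexp : 972 * Real.log n ^ 5 ≤ Real.exp ((1 - c) / 2 * Real.log n)) :
    prob (fun P : PrefProfile n => (stableHusbandCount n P g : ℝ) < c * Real.log n) ≤
      (5 + 8 / (1 - c) ^ 2) / Real.log n := by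
  have hmean : (c + (1 - c) / 2) * Real.log n ≤ recordMean (centralWindow n) := by
    have hlog := (Real.log_le_iff_le_exp (by positivity)).2 hexp
    linarith [log_sub_log_le_recordMean_centralWindow hn]
  have hfew : prob (fun P : PrefProfile n =>
      (recordCount (centralWindow n) (dismissalRanks P.1 P.2 g) : ℝ) < c * Real.log n) ≤
      2 / ((1 - c) / 2) ^ 2 / Real.log n := by
    refine (prob_dismissalRanks g fun τ =>
      (recordCount (centralWindow n) τ : ℝ) < c * Real.log n).trans_le <|
        (prob_mono fun τ hτ => ?_).trans
          (prob_abs_recordCount_sub_le_div_log (centralWindow n) (by linarith) hn)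
    rw [abs_sub_comm]
    exact le_trans (by linarith) (le_abs_self _)
  calc prob (fun P : PrefProfile n => (stableHusbandCount n P g : ℝ) < c * Real.log n)
      ≤ prob (fun P : PrefProfile n =>
          stableHusbandCount n P g < recordCount (centralWindow n) (dismissalRanks P.1 P.2 g) ∨
          (recordCount (centralWindow n) (dismissalRanks P.1 P.2 g) : ℝ) < c * Real.log n) := by
        refine prob_mono fun P hP => or_iff_not_imp_left.2 fun hle => lt_of_le_of_lt ?_ hP
        exact_mod_cast not_lt.1 hle
    _ ≤ 5 / Real.log n + 2 / ((1 - c) / 2) ^ 2 / Real.log n :=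
        (prob_or_le _ _).trans
          (add_le_add (prob_stableHusbandCount_lt_recordCount_centralWindow_le g hn) hfew)
    _ = (5 + 8 / (1 - c) ^ 2) / Real.log n := by
        have : 1 - c ≠ 0 := by linarith
        field_simp
        ring

lemma prob_lt_stableHusbandCount_le {C : ℝ} (hC : 1 < C) (g : Fin n) (hn : 1 ≤ Real.log n)
    (hn' : 2 ≤ (C - 1) * Real.log n) :
    prob (fun P : PrefProfile n => C * Real.log n < (stableHusbandCount n P g : ℝ)) ≤
      8 / (C - 1) ^ 2 / Real.log n := calc
  prob (fun P : PrefProfile n => C * Real.log n < (stableHusbandCount n P g : ℝ))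
      ≤ prob (fun P : PrefProfile n =>
          C * Real.log n < (recordCount univ (dismissalRanks P.1 P.2 g) : ℝ)) :=
    prob_mono fun P hP => hP.trans_le (mod_cast stableHusbandCount_le_recordCount P.1 P.2 g)
  _ = prob (fun τ : Equiv.Perm (Fin n) => C * Real.log n < (recordCount univ τ : ℝ)) :=
    prob_dismissalRanks g fun τ => C * Real.log n < (recordCount univ τ : ℝ)
  _ ≤ prob (fun τ : Equiv.Perm (Fin n) => (C - 1) / 2 * Real.log n ≤
        |(recordCount univ τ : ℝ) - recordMean univ|) :=
    prob_mono fun τ hτ => le_trans (by linarith [recordMean_le (univ : Finset (Fin n))])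
      (le_abs_self _)
  _ ≤ 2 / ((C - 1) / 2) ^ 2 / Real.log n :=
    prob_abs_recordCount_sub_le_div_log univ (by linarith) hn
  _ = 8 / (C - 1) ^ 2 / Real.log n := by
    have : C - 1 ≠ 0 := by linarith
    field_simp
    ring

end Tails

section Limit

open Filter

lemma tendsto_log_succ_atTop :
    Tendsto (fun n : ℕ => Real.log ((n + 1 : ℕ) : ℝ)) atTop atTop :=
  Real.tendsto_log_atTop.comp (tendsto_natCast_atTop_atTop.comp (tendsto_add_atTop_nat 1))

lemma tendsto_prob_stableHusbandCount_lt {c : ℝ} (hc : c < 1) (g : ∀ n, Fin (n + 1)) :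
    Tendsto (fun n : ℕ => prob (fun P : PrefProfile (n + 1) =>
      (stableHusbandCount (n + 1) P (g n) : ℝ) < c * Real.log (n + 1 : ℕ))) atTop (nhds 0) := by
  have hpoly : ∀ᶠ l : ℝ in atTop, 972 * l ^ 5 ≤ Real.exp ((1 - c) / 2 * l) := by
    filter_upwards [(isLittleO_pow_exp_pos_mul_atTop 5 (by linarith : 0 < (1 - c) / 2)).bound
      (by norm_num : (0 : ℝ) < 1 / 972), eventually_ge_atTop 0] with l hl hl0
    rw [Real.norm_of_nonneg (by positivity), Real.norm_of_nonneg (by positivity)] at hl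
    linarith
  refine squeeze_zero' (.of_forall fun n => prob_nonneg _) ?_
    (tendsto_log_succ_atTop.const_div_atTop (5 + 8 / (1 - c) ^ 2))
  filter_upwards [tendsto_log_succ_atTop.eventually_ge_atTop 1,
    tendsto_log_succ_atTop.eventually hpoly] with n hn hexp
  exact prob_stableHusbandCount_lt_le hc (g n) hn hexp

lemma tendsto_prob_lt_stableHusbandCount {C : ℝ} (hC : 1 < C) (g : ∀ n, Fin (n + 1)) :
    Tendsto (fun n : ℕ => prob (fun P : PrefProfile (n + 1) =>
      C * Real.log (n + 1 : ℕ) < (stableHusbandCount (n + 1) P (g n) : ℝ))) atTop (nhds 0) := by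
  refine squeeze_zero' (.of_forall fun n => prob_nonneg _) ?_
    (tendsto_log_succ_atTop.const_div_atTop (8 / (C - 1) ^ 2))
  filter_upwards [tendsto_log_succ_atTop.eventually_ge_atTop 1,
    tendsto_log_succ_atTop.eventually_ge_atTop (2 / (C - 1))] with n hn hC'
  exact prob_lt_stableHusbandCount_le hC (g n) hn ((div_le_iff₀' (by linarith)).1 hC')

end Limit

end StableMarriage

open StableMarriage in
theorem main_theorem_general (c C : ℝ) (hc : c < 1) (hC : 1 < C) (g : ∀ n, Fin (n + 1)) :
    Filter.Tendsto (fun n : ℕ =>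
        (Nat.card {P : PrefProfile (n + 1) //
            c * Real.log ((n : ℝ) + 1) ≤ (stableHusbandCount (n + 1) P (g n) : ℝ) ∧
            (stableHusbandCount (n + 1) P (g n) : ℝ) ≤ C * Real.log ((n : ℝ) + 1)} : ℝ) /
          (Nat.card (PrefProfile (n + 1)) : ℝ))
      Filter.atTop (nhds 1) := by
  have hbad := (tendsto_prob_stableHusbandCount_lt hc g).add
    (tendsto_prob_lt_stableHusbandCount hC g)
  simp only [← prob_eq_card_div_card, ← Nat.cast_add_one]
  refine tendsto_of_tendsto_of_tendsto_of_le_of_le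
    (by simpa only [add_zero, sub_zero] using hbad.const_sub 1) tendsto_const_nhds (fun n => ?_)
    fun n => prob_le_one _
  rw [sub_le_comm, ← prob_not]
  refine (prob_mono fun P hP => ?_).trans (prob_or_le _ _)
  rwa [not_and_or, not_le, not_le] at hP

/-- **Main theorem.** Fix constants `0 < c < 1/2` and `C > 1`.  Under a
uniformly random preference profile for `n` girls and `n` boys (probability =
number of favorable profiles divided by the total number of profiles), the
number `Hₙ` of stable husbands of a fixed girl (girl `0`) satisfies
`Pr(c ln n ≤ Hₙ ≤ C ln n) → 1` as `n → ∞`.  (The sequence is indexed by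
`n + 1` so that girl `0` exists for every index.) -/
theorem main_theorem (c C : ℝ) (hc0 : 0 < c) (hc : c < 1 / 2) (hC : 1 < C) :
    Filter.Tendsto (fun n : ℕ =>
        (Nat.card {P : PrefProfile (n + 1) //
            c * Real.log ((n : ℝ) + 1) ≤ (stableHusbandCount (n + 1) P 0 : ℝ) ∧
            (stableHusbandCount (n + 1) P 0 : ℝ) ≤ C * Real.log ((n : ℝ) + 1)} : ℝ) /
          (Nat.card (PrefProfile (n + 1)) : ℝ))
      Filter.atTop (nhds 1) :=
  main_theorem_general c C (by linarith) hC fun _ => 0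
end
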